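/- arXiv:1812.00632 — 4 statements merged into one kernel-verified Lean document; each statement's English description precedes it below -/
import Mathlib

section
/- Uniqueness addendum to the finite-horizon weak submartingale optimality principle (Lemma 2.1): In the setting of the finite-horizon optimality principle (hypotheses (i)–(iv) holding for the pair (α*, (W^{·,i})_i)), let α̃ ∈ A be any other Nash equilibrium such that E[W_0^{α̃,i}] = E[W_0^{α*,i}] and J^i(α̃) = J^i(α*) for every i ∈ {1,…,n}. Then for every i the map t ↦ E[S_t^{α̃,i}] is constant on [0,T], i.e. α̃ also satisfies condition (iv). -/
open MeasureTheory Set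

/-
Replacing `W_T` by `G` does not change the expectation of `S_T`, so `E[S_T] = J`, while
`E[S_0] = E[W_0]` because no cost has accumulated yet. Hence
`E[S̃_T] = J(α̃) = J(α*) = E[S*_T] = E[S*_0] = E[W_0*] = E[W̃_0] = E[S̃_0]`,
and a nondecreasing function with equal endpoint values is constant.
-/

section WeakMartingale

variable {Ω τ : Type*} [MeasurableSpace Ω] {P : Measure Ω}

/-- `X` is a weak submartingale on the set of times `I`: integrable with nondecreasing expectation,
as in condition (iii). In contrast to `MeasureTheory.Submartingale`, no filtration is involved. -/
def IsWeakSubmartingaleOn [Preorder τ] (X : τ → Ω → ℝ) (P : Measure Ω) (I : Set τ) : Prop :=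
  (∀ t ∈ I, Integrable (X t) P) ∧ MonotoneOn (fun t => ∫ ω, X t ω ∂P) I

/-- `X` is a weak martingale on the set of times `I`: integrable with constant expectation, as in
condition (iv). -/
def IsWeakMartingaleOn (X : τ → Ω → ℝ) (P : Measure Ω) (I : Set τ) : Prop :=
  (∀ t ∈ I, Integrable (X t) P) ∧ ∀ s ∈ I, ∀ t ∈ I, ∫ ω, X s ω ∂P = ∫ ω, X t ω ∂P

theorem eq_left_of_monotoneOn_Icc {β : Type*} [Preorder τ] [PartialOrder β] {f : τ → β} {a b t : τ}
    (hf : MonotoneOn f (Icc a b)) (hba : f b ≤ f a) (ht : t ∈ Icc a b) : f t = f a := by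
  have hab : a ≤ b := ht.1.trans ht.2
  exact le_antisymm ((hf ht (right_mem_Icc.2 hab) ht.2).trans hba)
    (hf (left_mem_Icc.2 hab) ht ht.1)

theorem IsWeakSubmartingaleOn.isWeakMartingaleOn_of_integral_le [Preorder τ] {X : τ → Ω → ℝ}
    {a b : τ} (hX : IsWeakSubmartingaleOn X P (Icc a b))
    (hba : ∫ ω, X b ω ∂P ≤ ∫ ω, X a ω ∂P) : IsWeakMartingaleOn X P (Icc a b) :=
  ⟨hX.1, fun _ hs _ ht =>
    (eq_left_of_monotoneOn_Icc hX.2 hba hs).trans (eq_left_of_monotoneOn_Icc hX.2 hba ht).symm⟩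

theorem integral_const_mul_add_congr {𝕜 : Type*} [RCLike 𝕜] {f g h : Ω → 𝕜} (c : 𝕜)
    (hf : Integrable f P) (hg : Integrable g P) (hh : Integrable h P)
    (hfg : ∫ ω, f ω ∂P = ∫ ω, g ω ∂P) :
    ∫ ω, (c * f ω + h ω) ∂P = ∫ ω, (c * g ω + h ω) ∂P := by
  rw [integral_add (hf.const_mul c) hh, integral_add (hg.const_mul c) hh,
    integral_const_mul, integral_const_mul, hfg]

end WeakMartingale

/-- `C α t` is the discounted cost accumulated up to time `t`; for a running cost `F` and discount
factor `D` it is `∫_0^t D_u F_u du`. -/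
theorem finite_horizon_weak_submartingale_optimality_uniqueness_general
    {Ω τ 𝒜 : Type*} [MeasurableSpace Ω] {P : Measure Ω} [Preorder τ] {a b : τ} (hab : a ≤ b)
    {D : τ → ℝ} {W C S : 𝒜 → τ → Ω → ℝ} {G : 𝒜 → Ω → ℝ} {J : 𝒜 → ℝ}
    (hW : ∀ α, Integrable (W α b) P) (hG : ∀ α, Integrable (G α) P)
    (hC : ∀ α ω, C α a ω = 0)
    (hS : ∀ α t ω, S α t ω = D t * W α t ω + C α t ω)
    (hJ : ∀ α, J α = ∫ ω, (C α b ω + D b * G α ω) ∂P)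
    (hWG : ∀ α, ∫ ω, W α b ω ∂P = ∫ ω, G α ω ∂P)
    (hsub : ∀ α, IsWeakSubmartingaleOn (S α) P (Icc a b))
    {αstar αtilde : 𝒜} (hstar : IsWeakMartingaleOn (S αstar) P (Icc a b))
    (hWa : ∫ ω, W αtilde a ω ∂P = ∫ ω, W αstar a ω ∂P)
    (hJle : J αtilde ≤ J αstar) :
    IsWeakMartingaleOn (S αtilde) P (Icc a b) := by
  have ha : a ∈ Icc a b := left_mem_Icc.2 hab
  have hb : b ∈ Icc a b := right_mem_Icc.2 hab
  have hCint (α : 𝒜) : Integrable (C α b) P := by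
    refine (((hsub α).1 b hb).sub ((hW α).const_mul (D b))).congr (.of_forall fun ω => ?_)
    simp only [Pi.sub_apply, hS, add_sub_cancel_left]
  have initial (α : 𝒜) : ∫ ω, S α a ω ∂P = D a * ∫ ω, W α a ω ∂P := by
    simp only [hS, hC, add_zero, integral_const_mul]
  have terminal (α : 𝒜) : ∫ ω, S α b ω ∂P = J α := by
    simp only [hS, hJ, add_comm (C α b _)]
    exact integral_const_mul_add_congr (D b) (hW α) (hG α) (hCint α) (hWG α)
  refine (hsub αtilde).isWeakMartingaleOn_of_integral_le ?_
  calc ∫ ω, S αtilde b ω ∂P = J αtilde := terminal αtilde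
    _ ≤ J αstar := hJle
    _ = ∫ ω, S αstar b ω ∂P := (terminal αstar).symm
    _ = ∫ ω, S αstar a ω ∂P := hstar.2 b hb a ha
    _ = ∫ ω, S αtilde a ω ∂P := by rw [initial, initial, hWa]

/-- Uniqueness addendum to the finite-horizon weak submartingale optimality principle
(Lemma 2.1): any other Nash equilibrium with the same initial value and the same costs
also satisfies condition (iv). -/
theorem finite_horizon_weak_submartingale_optimality_uniqueness
    {Ω : Type*} [MeasurableSpace Ω] (P : Measure Ω) [IsProbabilityMeasure P]
    (T ρ : ℝ) (hT : 0 < T) (hρ : 0 ≤ ρ)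
    (n : ℕ) (hn : 1 ≤ n)
    (A : Fin n → Type*) (hA : ∀ i, Nonempty (A i))
    (αstar : ∀ i, A i)
    (W F : (∀ i, A i) → Fin n → ℝ → Ω → ℝ)
    (G : (∀ i, A i) → Fin n → Ω → ℝ)
    (hWint : ∀ α i, ∀ t ∈ Icc (0 : ℝ) T, Integrable (W α i t) P)
    (hFmeas : ∀ α i, Measurable (Function.uncurry (F α i)))
    (hFint : ∀ α i,
      IntegrableOn (fun u => Real.exp (-ρ * u) * ∫ ω, |F α i u ω| ∂P) (Icc (0 : ℝ) T))
    (hGint : ∀ α i, Integrable (G α i) P)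
    (S : (∀ i, A i) → Fin n → ℝ → Ω → ℝ)
    (hS : ∀ α i t ω, S α i t ω =
      Real.exp (-ρ * t) * W α i t ω + ∫ u in Icc (0 : ℝ) t, Real.exp (-ρ * u) * F α i u ω)
    (J : Fin n → (∀ i, A i) → ℝ)
    (hJ : ∀ i α, J i α =
      ∫ ω, ((∫ u in Icc (0 : ℝ) T, Real.exp (-ρ * u) * F α i u ω)
        + Real.exp (-ρ * T) * G α i ω) ∂P)
    -- (i) E[W₀^{α,i}] does not depend on the i-th coordinate of α
    (h1 : ∀ i, ∀ α α' : ∀ j, A j, (∀ j, j ≠ i → α j = α' j) →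
      ∫ ω, W α i 0 ω ∂P = ∫ ω, W α' i 0 ω ∂P)
    -- (ii) E[W_T^{α,i}] = E[G^{α,i}]
    (h2 : ∀ i α, ∫ ω, W α i T ω ∂P = ∫ ω, G α i ω ∂P)
    -- (iii) t ↦ E[S_t^{α,i}] is well defined and nondecreasing on [0,T]
    (h3 : ∀ i α, (∀ t ∈ Icc (0 : ℝ) T, Integrable (S α i t) P) ∧
      MonotoneOn (fun t => ∫ ω, S α i t ω ∂P) (Icc (0 : ℝ) T))
    -- (iv) t ↦ E[S_t^{α*,i}] is constant on [0,T]
    (h4 : ∀ i, ∀ t ∈ Icc (0 : ℝ) T,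
      ∫ ω, S αstar i t ω ∂P = ∫ ω, S αstar i 0 ω ∂P)
    -- α̃ is another Nash equilibrium with the same initial values and costs
    (αtilde : ∀ i, A i)
    (hNash : ∀ i, ∀ ai : A i, J i αtilde ≤ J i (Function.update αtilde i ai))
    (hW0 : ∀ i, ∫ ω, W αtilde i 0 ω ∂P = ∫ ω, W αstar i 0 ω ∂P)
    (hJeq : ∀ i, J i αtilde = J i αstar) :
    ∀ i, ∀ t ∈ Icc (0 : ℝ) T,
      ∫ ω, S αtilde i t ω ∂P = ∫ ω, S αtilde i 0 ω ∂P := by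
  have h0 : (0 : ℝ) ∈ Icc 0 T := left_mem_Icc.2 hT.le
  have hTmem : T ∈ Icc 0 T := right_mem_Icc.2 hT.le
  intro i t ht
  have hstar : IsWeakMartingaleOn (S αstar i) P (Icc 0 T) :=
    ⟨(h3 i αstar).1, fun s hs t ht => (h4 i s hs).trans (h4 i t ht).symm⟩
  exact (finite_horizon_weak_submartingale_optimality_uniqueness_general (S := (S · i)) hT.le
    (fun α => hWint α i T hTmem) (hGint · i) (fun α ω => by simp) (hS · i) (hJ i) (h2 i) (h3 i)
    hstar (hW0 i) (hJeq i).le).2 t ht 0 h0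
end

section
/- Preservation of the Riccati positivity condition under a positive semidefinite perturbation (algebraic lemma used in Step 6(ii)): Let d, d₁ ≥ 1, δ > 0, K a symmetric positive semidefinite real d × d matrix, Q̂ a symmetric real d × d matrix, N̂ a symmetric real d₁ × d₁ matrix with N̂ ⪰ δ I_{d₁}, Î a real d₁ × d matrix, σ̂ₓ a real d × d matrix and σ̂ᵢ a real d × d₁ matrix. If Q̂ − Îᵀ N̂⁻¹ Î is positive semidefinite, then the matrix N̂ + σ̂ᵢᵀ K σ̂ᵢ is symmetric positive definite (hence invertible) and (Q̂ + σ̂ₓᵀ K σ̂ₓ) − (Î + σ̂ᵢᵀ K σ̂ₓ)ᵀ (N̂ + σ̂ᵢᵀ K σ̂ᵢ)⁻¹ (Î + σ̂ᵢᵀ K σ̂ₓ) is positive semidefinite. -/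
open Matrix

/-!
If `N` is positive definite, then `Q - Iᴴ * N⁻¹ * I` is the Schur complement of `N` in the block
matrix `[[Q, Iᴴ], [I, N]]`, so the Riccati condition says exactly that this block matrix is positive
semidefinite. The perturbation adds to it the congruence `Sᴴ * K * S` with `S = [σx, σi]`, and a sum
of positive semidefinite matrices is positive semidefinite.
-/

theorem posDef_of_posSemidef_sub {n R : Type*} [Ring R] [PartialOrder R] [StarRing R]
    [AddLeftMono R] {A B : Matrix n n R} (hAB : (A - B).PosSemidef) (hB : B.PosDef) :
    A.PosDef := by
  simpa only [sub_add_cancel] using PosDef.posSemidef_add hAB hB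

theorem posSemidef_fromBlocks_conjTranspose_mul_mul {m n p R : Type*} [Finite m] [Finite n]
    [Fintype p] [Ring R] [PartialOrder R] [StarRing R] {K : Matrix p p R} (hK : K.PosSemidef)
    (X : Matrix p m R) (Y : Matrix p n R) :
    (fromBlocks (Xᴴ * K * X) (Xᴴ * K * Y) (Yᴴ * K * X) (Yᴴ * K * Y)).PosSemidef := by
  rw [← fromRows_mul_fromCols, ← fromRows_mul, ← conjTranspose_fromCols_eq_fromRows_conjTranspose]
  exact hK.conjTranspose_mul_mul_same (fromCols X Y)

section SchurComplement

variable {m n 𝕜 : Type*} [Finite m] [Fintype n] [DecidableEq n]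
  [Field 𝕜] [PartialOrder 𝕜] [StarRing 𝕜] [StarOrderedRing 𝕜]

theorem posSemidef_fromBlocks_iff_schurComplement (A : Matrix m m 𝕜) (C : Matrix n m 𝕜)
    {D : Matrix n n 𝕜} (hD : D.PosDef) :
    (fromBlocks A Cᴴ C D).PosSemidef ↔ (A - Cᴴ * D⁻¹ * C).PosSemidef := by
  let := hD.isUnit.invertible
  simpa only [conjTranspose_conjTranspose] using PosDef.fromBlocks₂₂ A Cᴴ hD

theorem posSemidef_schurComplement_add {A A' : Matrix m m 𝕜} {C C' : Matrix n m 𝕜}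
    {D D' : Matrix n n 𝕜} (hD : D.PosDef) (h_schur : (A - Cᴴ * D⁻¹ * C).PosSemidef)
    (h_block : (fromBlocks A' C'ᴴ C' D').PosSemidef) :
    ((A + A') - (C + C')ᴴ * (D + D')⁻¹ * (C + C')).PosSemidef := by
  have hD' : D'.PosSemidef := h_block.submatrix Sum.inr
  rw [← posSemidef_fromBlocks_iff_schurComplement _ _ (hD.add_posSemidef hD'),
    conjTranspose_add, ← fromBlocks_add]
  exact ((posSemidef_fromBlocks_iff_schurComplement A C hD).mpr h_schur).add h_block

theorem riccati_positivity_preserved_general {p : Type*} [Fintype p] {K : Matrix p p 𝕜}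
    (hK : K.PosSemidef) {Q : Matrix m m 𝕜} {N : Matrix n n 𝕜} (hN : N.PosDef)
    {I : Matrix n m 𝕜} (hQI : (Q - Iᴴ * N⁻¹ * I).PosSemidef)
    (σx : Matrix p m 𝕜) (σi : Matrix p n 𝕜) :
    (N + σiᴴ * K * σi).PosDef ∧
    ((Q + σxᴴ * K * σx) -
      (I + σiᴴ * K * σx)ᴴ * (N + σiᴴ * K * σi)⁻¹ * (I + σiᴴ * K * σx)).PosSemidef := by
  have h_cross : (σiᴴ * K * σx)ᴴ = σxᴴ * K * σi := by
    simp only [conjTranspose_mul, conjTranspose_conjTranspose, hK.isHermitian.eq, Matrix.mul_assoc]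
  refine ⟨hN.add_posSemidef (hK.conjTranspose_mul_mul_same σi),
    posSemidef_schurComplement_add hN hQI ?_⟩
  rw [h_cross]
  exact posSemidef_fromBlocks_conjTranspose_mul_mul hK σx σi

end SchurComplement

/-- Preservation of the Riccati positivity condition under a positive semidefinite
perturbation (algebraic lemma used in Step 6(ii)). -/
theorem riccati_positivity_preserved
    (d d₁ : ℕ) (hd : 1 ≤ d) (hd₁ : 1 ≤ d₁) (δ : ℝ) (hδ : 0 < δ)
    (K : Matrix (Fin d) (Fin d) ℝ) (hK : K.PosSemidef)
    (Qhat : Matrix (Fin d) (Fin d) ℝ) (hQhat : Qhat.IsHermitian)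
    (Nhat : Matrix (Fin d₁) (Fin d₁) ℝ) (hNhatsymm : Nhat.IsHermitian)
    (hNhat : (Nhat - δ • (1 : Matrix (Fin d₁) (Fin d₁) ℝ)).PosSemidef)
    (Ihat : Matrix (Fin d₁) (Fin d) ℝ)
    (σhatx : Matrix (Fin d) (Fin d) ℝ)
    (σhati : Matrix (Fin d) (Fin d₁) ℝ)
    (hQI : (Qhat - Ihatᵀ * Nhat⁻¹ * Ihat).PosSemidef) :
    (Nhat + σhatiᵀ * K * σhati).PosDef ∧
    ((Qhat + σhatxᵀ * K * σhatx) -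
      (Ihat + σhatiᵀ * K * σhatx)ᵀ * (Nhat + σhatiᵀ * K * σhati)⁻¹ *
        (Ihat + σhatiᵀ * K * σhatx)).PosSemidef := by
  have hN : Nhat.PosDef := posDef_of_posSemidef_sub hNhat (PosDef.one.smul hδ)
  simp only [← conjTranspose_eq_transpose_of_trivial] at hQI ⊢
  exact riccati_positivity_preserved_general hK hN hQI σhatx σhati
end

section
/- Well-posedness of the matrix Riccati ODE for K (Step 6(i)): Let T > 0, ρ ≥ 0, δ > 0, and let Q : [0,T] → S^d, bₓ, σₓ : [0,T] → ℝ^{d×d}, b₁, σ₁ : [0,T] → ℝ^{d×d₁}, I : [0,T] → ℝ^{d₁×d}, N : [0,T] → S^{d₁} be continuous and bounded, with, for every t ∈ [0,T]: Q_t positive semidefinite, N_t ⪰ δ I_{d₁}, and Q_t − I_tᵀ N_t⁻¹ I_t positive semidefinite. Let P be a symmetric positive semidefinite d × d matrix. Then there exists a unique bounded continuously differentiable map K : [0,T] → S^d, taking positive semidefinite values, such that K_T = P and for every t ∈ [0,T]: K′_t + Q_t + σₓ,ᵗᵀ K_t σₓ,ᵗ + K_t bₓ,ᵗ + bₓ,ᵗᵀ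 K_t − ρ K_t − (I_t + σ₁,ᵗᵀ K_t σₓ,ᵗ + b₁,ᵗᵀ K_t)ᵀ (N_t + σ₁,ᵗᵀ K_t σ₁,ᵗ)⁻¹ (I_t + σ₁,ᵗᵀ K_t σₓ,ᵗ + b₁,ᵗᵀ K_t) = 0. -/
open Matrix Set

attribute [local instance] Matrix.normedAddCommGroup Matrix.normedSpace

/-! The equation is the Hamilton-Jacobi-Bellman equation of a linear-quadratic control problem.
Completing the square, the Riccati operator is the minimum over linear feedbacks `Θ`, in the
Loewner order, of operators affine in `K` (`bellman Θ`), attained at the feedback `greedy K`. For a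
fixed feedback the backward equation is a linear Lyapunov equation, and it preserves positive
semidefiniteness. Hence replacing a feedback by the greedy one of its cost lowers the cost, the
resulting decreasing sequence of positive semidefinite costs converges, and its limit solves the
Riccati equation. Comparing two solutions through the greedy feedback of one of them gives
uniqueness. -/

open Filter
open scoped Topology NNReal

section ODE

variable {E : Type*} [NormedAddCommGroup E] [NormedSpace ℝ E] {a b : ℝ}

/-- The radial retraction of a normed space onto the closed ball of radius `R` about the origin,
used to truncate a vector field outside that ball. -/
noncomputable def radialRetraction (R : ℝ) (x : E) : E := (R / max ‖x‖ R) • x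

lemma norm_radialRetraction_eq {R : ℝ} (hR : 0 < R) (x : E) :
    ‖radialRetraction R x‖ = R / max ‖x‖ R * ‖x‖ := by
  rw [radialRetraction, norm_smul, Real.norm_of_nonneg (by positivity)]

lemma norm_radialRetraction_le_radius {R : ℝ} (hR : 0 < R) (x : E) :
    ‖radialRetraction R x‖ ≤ R := by
  rw [norm_radialRetraction_eq hR, div_mul_eq_mul_div, div_le_iff₀ (by positivity)]
  gcongr
  exact le_max_left _ _

lemma norm_radialRetraction_le_norm {R : ℝ} (hR : 0 < R) (x : E) :
    ‖radialRetraction R x‖ ≤ ‖x‖ := by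
  rw [norm_radialRetraction_eq hR]
  exact mul_le_of_le_one_left (norm_nonneg x) (div_le_one_of_le₀ (le_max_right _ _) (by positivity))

lemma radialRetraction_of_norm_le {R : ℝ} (hR : 0 < R) {x : E} (hx : ‖x‖ ≤ R) :
    radialRetraction R x = x := by
  rw [radialRetraction, max_eq_right hx, div_self hR.ne', one_smul]

lemma lipschitzWith_radialRetraction {R : ℝ} (hR : 0 < R) :
    LipschitzWith 2 (radialRetraction R : E → E) := by
  refine LipschitzWith.of_dist_le_mul fun x y ↦ ?_
  set p := max ‖x‖ R
  set q := max ‖y‖ R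
  have hp : 0 < p := lt_max_of_lt_right hR
  have hq : 0 < q := lt_max_of_lt_right hR
  have hpq : |q - p| ≤ ‖x - y‖ :=
    calc |q - p| ≤ |‖y‖ - ‖x‖| := abs_max_sub_max_le_abs _ _ _
      _ ≤ ‖x - y‖ := by rw [norm_sub_rev]; exact abs_norm_sub_norm_le y x
  have hsplit : radialRetraction R x - radialRetraction R y =
      (R / p) • (x - y) + (R / p * ((q - p) / q)) • y := by
    have : R / p * ((q - p) / q) = R / p - R / q := by field_simp
    rw [this, radialRetraction, radialRetraction]
    module
  rw [dist_eq_norm, dist_eq_norm, hsplit]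
  calc ‖(R / p) • (x - y) + (R / p * ((q - p) / q)) • y‖
      ≤ R / p * ‖x - y‖ + R / p * (|q - p| * (‖y‖ / q)) := by
        refine (norm_add_le _ _).trans_eq ?_
        simp only [norm_smul, norm_mul, norm_div, Real.norm_eq_abs, abs_of_pos hR, abs_of_pos hp,
          abs_of_pos hq]
        ring
    _ ≤ 1 * ‖x - y‖ + 1 * (‖x - y‖ * 1) := by
        have hRp : R / p ≤ 1 := div_le_one_of_le₀ (le_max_right _ _) hp.le
        have hyq : ‖y‖ / q ≤ 1 := div_le_one_of_le₀ (le_max_left _ _) hq.le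
        gcongr
    _ = (2 : ℝ≥0) * ‖x - y‖ := by push_cast; ring

variable [CompleteSpace E]

lemma exists_hasDerivWithinAt_of_lipschitzWith_of_norm_le (hab : a ≤ b) {f : ℝ → E → E} {L : ℝ≥0}
    {M : ℝ} (hf : ∀ x, ContinuousOn (f · x) (Icc a b))
    (hL : ∀ t ∈ Icc a b, LipschitzWith L (f t)) (hM : ∀ t ∈ Icc a b, ∀ x, ‖f t x‖ ≤ M) (x₀ : E) :
    ∃ X : ℝ → E, X a = x₀ ∧ ∀ t ∈ Icc a b, HasDerivWithinAt X (f t (X t)) (Icc a b) t := by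
  have hM₀ : 0 ≤ M := (norm_nonneg _).trans (hM a (left_mem_Icc.2 hab) 0)
  have hpl : IsPicardLindelof f (⟨a, left_mem_Icc.2 hab⟩ : Icc a b) x₀
      (M * (b - a)).toNNReal 0 M.toNNReal L :=
    { lipschitzOnWith := fun t ht ↦ (hL t ht).lipschitzOnWith
      continuousOn := fun x _ ↦ hf x
      norm_le := fun t ht x _ ↦ (hM t ht x).trans (Real.le_coe_toNNReal M)
      mul_max_le := by
        rw [Real.coe_toNNReal _ hM₀, Real.coe_toNNReal _ (mul_nonneg hM₀ (sub_nonneg.2 hab))]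
        simp [hab] }
  exact hpl.exists_eq_forall_mem_Icc_hasDerivWithinAt₀

-- A priori, a solution cannot leave the ball whose radius is the Grönwall bound, so truncating
-- the field outside a slightly larger ball does not change it.
lemma exists_hasDerivWithinAt_of_lipschitzWith (hab : a ≤ b) {f : ℝ → E → E} {L : ℝ≥0}
    (hf : ∀ x, ContinuousOn (f · x) (Icc a b))
    (hL : ∀ t ∈ Icc a b, LipschitzWith L (f t)) (x₀ : E) :
    ∃ X : ℝ → E, X a = x₀ ∧ ∀ t ∈ Icc a b, HasDerivWithinAt X (f t (X t)) (Icc a b) t := by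
  obtain ⟨B, hB⟩ := isCompact_Icc.exists_bound_of_continuousOn (hf 0)
  have hB₀ : 0 ≤ B := (norm_nonneg _).trans (hB a (left_mem_Icc.2 hab))
  have hgrowth : ∀ t ∈ Icc a b, ∀ x, ‖f t x‖ ≤ L * ‖x‖ + B := fun t ht x ↦
    calc ‖f t x‖ ≤ ‖f t x - f t 0‖ + ‖f t 0‖ := norm_le_norm_sub_add _ _
      _ ≤ L * ‖x‖ + B := add_le_add (by simpa using (hL t ht).norm_sub_le x 0) (hB t ht)
  have hmono := gronwallBound_mono (norm_nonneg x₀) hB₀ L.2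
  set R := gronwallBound ‖x₀‖ L B (b - a) + 1
  have hR : 0 < R := by
    have := hmono (sub_nonneg.2 hab)
    rw [gronwallBound_x0] at this
    exact add_pos_of_nonneg_of_pos ((norm_nonneg x₀).trans this) one_pos
  obtain ⟨X, hXa, hX⟩ := exists_hasDerivWithinAt_of_lipschitzWith_of_norm_le hab
    (f := fun t x ↦ f t (radialRetraction R x)) (L := L * 2) (M := L * R + B)
    (fun x ↦ hf _) (fun t ht ↦ (hL t ht).comp (lipschitzWith_radialRetraction hR))
    (fun t ht x ↦ (hgrowth t ht _).trans
      (by gcongr; exact norm_radialRetraction_le_radius hR x)) x₀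
  have hbound : ∀ t ∈ Icc a b, ‖X t‖ ≤ gronwallBound ‖x₀‖ L B (t - a) :=
    norm_le_gronwallBound_of_norm_deriv_right_le (fun t ht ↦ (hX t ht).continuousWithinAt)
      (fun t ht ↦ (hX t (Ico_subset_Icc_self ht)).mono_of_mem_nhdsWithin
        (Icc_mem_nhdsGE_of_mem ht)) (by rw [hXa])
      (fun t ht ↦ (hgrowth t (Ico_subset_Icc_self ht) _).trans
        (by gcongr; exact norm_radialRetraction_le_norm hR _))
  refine ⟨X, hXa, fun t ht ↦ ?_⟩
  have hXR : ‖X t‖ ≤ R :=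
    ((hbound t ht).trans (hmono (by linarith [ht.2]))).trans (lt_add_one _).le
  simpa only [radialRetraction_of_norm_le hR hXR] using hX t ht

lemma exists_hasDerivWithinAt_of_lipschitzWith_right (hab : a ≤ b) {f : ℝ → E → E} {L : ℝ≥0}
    (hf : ∀ x, ContinuousOn (f · x) (Icc a b))
    (hL : ∀ t ∈ Icc a b, LipschitzWith L (f t)) (x₁ : E) :
    ∃ X : ℝ → E, X b = x₁ ∧ ∀ t ∈ Icc a b, HasDerivWithinAt X (f t (X t)) (Icc a b) t := by
  have hmaps : MapsTo (fun t ↦ a + b - t) (Icc a b) (Icc a b) := fun t ht ↦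
    ⟨by linarith [ht.2], by linarith [ht.1]⟩
  obtain ⟨Y, hYa, hY⟩ := exists_hasDerivWithinAt_of_lipschitzWith hab
    (f := fun t x ↦ -f (a + b - t) x) (fun x ↦ ((hf x).comp (by fun_prop) hmaps).neg)
    (fun t ht ↦ (hL _ (hmaps ht)).neg) x₁
  refine ⟨fun t ↦ Y (a + b - t), by simp [hYa], fun t ht ↦ ?_⟩
  have hrev : HasDerivWithinAt (fun t ↦ a + b - t) (-1) (Icc a b) t :=
    ((hasDerivAt_id t).const_sub (a + b)).hasDerivWithinAt
  simpa [Function.comp_def] using (hY _ (hmaps ht)).scomp t hrev hmaps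

lemma exists_hasDerivWithinAt_affine (hab : a ≤ b) {A : ℝ → E →L[ℝ] E} {s : ℝ → E}
    (hA : ContinuousOn A (Icc a b)) (hs : ContinuousOn s (Icc a b)) (x₁ : E) :
    ∃ X : ℝ → E, X b = x₁ ∧ ∀ t ∈ Icc a b, HasDerivWithinAt X (A t (X t) + s t) (Icc a b) t := by
  obtain ⟨L, hL⟩ := isCompact_Icc.exists_bound_of_continuousOn hA
  refine exists_hasDerivWithinAt_of_lipschitzWith_right hab (f := fun t x ↦ A t x + s t)
    (L := L.toNNReal) (fun x ↦ (hA.clm_apply continuousOn_const).add hs) (fun t ht ↦ ?_) x₁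
  have hlip : LipschitzWith L.toNNReal (A t) :=
    (A t).lipschitz.weaken (NNReal.le_toNNReal_of_coe_le (hL t ht))
  simpa using hlip.add (LipschitzWith.const (s t))

end ODE

section PointwiseLimits

variable {E : Type*} [NormedAddCommGroup E] [NormedSpace ℝ E] [CompleteSpace E]
  {a b : ℝ}

lemma lipschitzOnWith_of_tendsto {α β : Type*} [PseudoMetricSpace α] [PseudoMetricSpace β]
    {f : ℕ → α → β} {g : α → β} {s : Set α} {L : ℝ≥0} (hf : ∀ k, LipschitzOnWith L (f k) s)
    (hfg : ∀ x ∈ s, Tendsto (f · x) atTop (𝓝 (g x))) : LipschitzOnWith L g s :=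
  LipschitzOnWith.of_dist_le_mul fun x hx y hy ↦
    le_of_tendsto ((hfg x hx).dist (hfg y hy)) (.of_forall fun k ↦ (hf k).dist_le_mul x hx y hy)

lemma integral_eq_sub_of_hasDerivWithinAt_Icc {X V : ℝ → E}
    (hX : ∀ t ∈ Icc a b, HasDerivWithinAt X (V t) (Icc a b) t) (hV : ContinuousOn V (Icc a b))
    {t : ℝ} (ht : t ∈ Icc a b) : ∫ s in a..t, V s = X t - X a := by
  have hsub : Icc a t ⊆ Icc a b := Icc_subset_Icc_right ht.2
  refine intervalIntegral.integral_eq_sub_of_hasDerivAt_of_le ht.1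
    (fun s hs ↦ (hX s (hsub hs)).continuousWithinAt.mono hsub) (fun s hs ↦ ?_)
    ((hV.mono hsub).intervalIntegrable_of_Icc ht.1)
  exact (hX s (hsub (Ioo_subset_Icc_self hs))).hasDerivAt
    (Icc_mem_nhds hs.1 (hs.2.trans_le ht.2))

lemma hasDerivWithinAt_of_tendsto_of_norm_le {X V : ℕ → ℝ → E} {Y v : ℝ → E} {B : ℝ}
    (hX : ∀ k, ∀ t ∈ Icc a b, HasDerivWithinAt (X k) (V k t) (Icc a b) t)
    (hV : ∀ k, ContinuousOn (V k) (Icc a b)) (hB : ∀ k, ∀ t ∈ Icc a b, ‖V k t‖ ≤ B)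
    (hv : ContinuousOn v (Icc a b))
    (hXY : ∀ t ∈ Icc a b, Tendsto (X · t) atTop (𝓝 (Y t)))
    (hVv : ∀ t ∈ Icc a b, Tendsto (V · t) atTop (𝓝 (v t))) :
    ∀ t ∈ Icc a b, HasDerivWithinAt Y (v t) (Icc a b) t := by
  have hint : ∀ t ∈ Icc a b, Y t = Y a + ∫ s in a..t, v s := by
    intro t ht
    have ha : a ∈ Icc a b := ⟨le_rfl, ht.1.trans ht.2⟩
    have hsub : uIoc a t ⊆ Icc a b := by
      rw [uIoc_of_le ht.1]
      exact Ioc_subset_Icc_self.trans (Icc_subset_Icc_right ht.2)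
    have hlim : Tendsto (fun k ↦ ∫ s in a..t, V k s) atTop (𝓝 (∫ s in a..t, v s)) :=
      intervalIntegral.tendsto_integral_filter_of_dominated_convergence (fun _ ↦ B)
        (.of_forall fun k ↦ ((hV k).mono hsub).aestronglyMeasurable measurableSet_uIoc)
        (.of_forall fun k ↦ .of_forall fun s hs ↦ hB k s (hsub hs)) intervalIntegrable_const
        (.of_forall fun s hs ↦ hVv s (hsub hs))
    simp only [integral_eq_sub_of_hasDerivWithinAt_Icc (hX _) (hV _) ht] at hlim
    rw [tendsto_nhds_unique hlim ((hXY t ht).sub (hXY a ha)), add_sub_cancel]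
  intro t ht
  have hpicard := ODE.hasDerivWithinAt_picard_Icc (f := fun s (_ : E) ↦ v s) (u := univ)
    (α := fun _ ↦ 0) (left_mem_Icc.2 (ht.1.trans ht.2))
    (hv.comp continuousOn_fst fun _ hp ↦ hp.1) continuousOn_const (fun _ _ ↦ mem_univ _) (Y a) ht
  exact hpicard.congr hint (hint t ht)

lemma hasDerivWithinAt_of_recursion_tendsto {H : ℝ → E → E → E} {U : Set E} (hU : IsCompact U)
    (hH : ContinuousOn (fun p : ℝ × E × E ↦ H p.1 p.2.1 p.2.2) (Icc a b ×ˢ U ×ˢ U))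
    {X : ℕ → ℝ → E} {Y : ℝ → E} (hXU : ∀ k, ∀ t ∈ Icc a b, X k t ∈ U)
    (hXc : ∀ k, ContinuousOn (X k) (Icc a b))
    (hX : ∀ k, ∀ t ∈ Icc a b,
      HasDerivWithinAt (X (k + 1)) (H t (X k t) (X (k + 1) t)) (Icc a b) t)
    (hXY : ∀ t ∈ Icc a b, Tendsto (X · t) atTop (𝓝 (Y t))) :
    ∀ t ∈ Icc a b, HasDerivWithinAt Y (H t (Y t) (Y t)) (Icc a b) t := by
  have hXY' : ∀ t ∈ Icc a b, Tendsto (fun k ↦ X (k + 1) t) atTop (𝓝 (Y t)) := fun t ht ↦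
    (hXY t ht).comp (tendsto_add_atTop_nat 1)
  have hYU : ∀ t ∈ Icc a b, Y t ∈ U := fun t ht ↦
    hU.isClosed.mem_of_tendsto (hXY t ht) (.of_forall fun k ↦ hXU k t ht)
  obtain ⟨B, hB⟩ := (isCompact_Icc.prod (hU.prod hU)).exists_bound_of_continuousOn hH
  have hHB : ∀ k, ∀ t ∈ Icc a b, ‖H t (X k t) (X (k + 1) t)‖ ≤ B := fun k t ht ↦
    hB (t, X k t, X (k + 1) t) ⟨ht, hXU k t ht, hXU (k + 1) t ht⟩
  have hYc : ContinuousOn Y (Icc a b) := by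
    have hlip (k) : LipschitzOnWith B.toNNReal (X (k + 1)) (Icc a b) :=
      (convex_Icc a b).lipschitzOnWith_of_nnnorm_hasDerivWithin_le (hX k)
        fun t ht ↦ NNReal.le_toNNReal_of_coe_le (hHB k t ht)
    exact (lipschitzOnWith_of_tendsto hlip hXY').continuousOn
  have hHc {K L : ℝ → E} (hK : ContinuousOn K (Icc a b)) (hL : ContinuousOn L (Icc a b))
      (hKU : ∀ t ∈ Icc a b, K t ∈ U) (hLU : ∀ t ∈ Icc a b, L t ∈ U) :
      ContinuousOn (fun t ↦ H t (K t) (L t)) (Icc a b) :=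
    hH.comp (f := fun t ↦ (t, K t, L t)) (continuousOn_id.prodMk (hK.prodMk hL))
      fun t ht ↦ ⟨ht, hKU t ht, hLU t ht⟩
  refine hasDerivWithinAt_of_tendsto_of_norm_le hX
    (fun k ↦ hHc (hXc k) (hXc (k + 1)) (hXU k) (hXU (k + 1))) hHB (hHc hYc hYc hYU hYU) hXY'
    fun t ht ↦ ?_
  exact (hH (t, Y t, Y t) ⟨ht, hYU t ht, hYU t ht⟩).tendsto.comp (tendsto_nhdsWithin_iff.2
    ⟨tendsto_const_nhds.prodMk_nhds ((hXY t ht).prodMk_nhds (hXY' t ht)),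
      .of_forall fun k ↦ ⟨ht, hXU k t ht, hXU (k + 1) t ht⟩⟩)

end PointwiseLimits

section MatrixContinuity

variable {X l m n : Type*} [TopologicalSpace X] {s : Set X}

@[fun_prop]
lemma continuousOn_matrix_transpose {A : X → Matrix m n ℝ} (hA : ContinuousOn A s) :
    ContinuousOn (fun x ↦ (A x)ᵀ) s :=
  continuous_id.matrix_transpose.comp_continuousOn hA

@[fun_prop]
lemma continuousOn_matrix_mul [Fintype m] {A : X → Matrix l m ℝ} {B : X → Matrix m n ℝ}
    (hA : ContinuousOn A s) (hB : ContinuousOn B s) : ContinuousOn (fun x ↦ A x * B x) s := by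
  have hmul : Continuous fun p : Matrix l m ℝ × Matrix m n ℝ ↦ p.1 * p.2 :=
    continuous_fst.matrix_mul continuous_snd
  exact hmul.comp_continuousOn (hA.prodMk hB)

lemma continuousOn_matrix_inv [Fintype n] [DecidableEq n] {A : X → Matrix n n ℝ}
    (hA : ContinuousOn A s) (hu : ∀ x ∈ s, IsUnit (A x)) : ContinuousOn (fun x ↦ (A x)⁻¹) s := by
  intro x hx
  have hdet : (A x).det ≠ 0 := ((isUnit_iff_isUnit_det _).1 (hu x hx)).ne_zero
  have hinv : ContinuousAt Ring.inverse (A x).det := by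
    rw [Ring.inverse_eq_inv']
    exact continuousAt_inv₀ hdet
  exact (continuousAt_matrix_inv _ hinv).comp_continuousWithinAt (hA x hx)

end MatrixContinuity

section PosSemidef

open scoped MatrixOrder

variable {m n : Type*}

lemma posDef_of_posSemidef_sub_smul_one [DecidableEq n] {M : Matrix n n ℝ} {δ : ℝ} (hδ : 0 < δ)
    (hM : (M - δ • (1 : Matrix n n ℝ)).PosSemidef) : M.PosDef := by
  simpa using PosDef.posSemidef_add hM (PosDef.one.smul hδ)

variable [Fintype n]

lemma posSemidef_transpose_mul_mul [Finite m] {M : Matrix n n ℝ} (hM : M.PosSemidef)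
    (B : Matrix n m ℝ) : (Bᵀ * M * B).PosSemidef := by
  simpa only [conjTranspose_eq_transpose_of_trivial] using hM.conjTranspose_mul_mul_same B

/-- The value at `x` of the quadratic form of a matrix, as a linear functional of the matrix. -/
def quadFormAt (x : n → ℝ) : Matrix n n ℝ →ₗ[ℝ] ℝ where
  toFun M := x ⬝ᵥ M *ᵥ x
  map_add' M N := by rw [add_mulVec, dotProduct_add]
  map_smul' c M := by rw [smul_mulVec, dotProduct_smul, RingHom.id_apply]

lemma quadFormAt_apply (x : n → ℝ) (M : Matrix n n ℝ) : quadFormAt x M = x ⬝ᵥ M *ᵥ x := rfl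

lemma quadFormAt_smul (r : ℝ) (x : n → ℝ) (M : Matrix n n ℝ) :
    quadFormAt (r • x) M = r ^ 2 * quadFormAt x M := by
  simp only [quadFormAt_apply, mulVec_smul, smul_dotProduct, dotProduct_smul, smul_eq_mul]
  ring

lemma quadFormAt_nonneg {M : Matrix n n ℝ} (hM : M.PosSemidef) (x : n → ℝ) :
    0 ≤ quadFormAt x M := by
  simpa only [star_trivial, quadFormAt_apply] using hM.dotProduct_mulVec_nonneg x

lemma quadFormAt_pos {M : Matrix n n ℝ} (hM : M.PosDef) {x : n → ℝ} (hx : x ≠ 0) :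
    0 < quadFormAt x M := by
  simpa only [star_trivial, quadFormAt_apply] using hM.dotProduct_mulVec_pos hx

lemma posSemidef_iff_quadFormAt_nonneg {M : Matrix n n ℝ} :
    M.PosSemidef ↔ M.IsHermitian ∧ ∀ x, 0 ≤ quadFormAt x M := by
  simp only [posSemidef_iff_dotProduct_mulVec, star_trivial, quadFormAt_apply]

lemma quadFormAt_mono (x : n → ℝ) : Monotone (quadFormAt x) := fun A B hAB ↦ by
  simpa only [map_sub, sub_nonneg] using quadFormAt_nonneg (Matrix.le_iff.1 hAB) x

lemma continuous_quadFormAt (x : n → ℝ) : Continuous (quadFormAt x) :=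
  (quadFormAt x).continuous_of_finiteDimensional

lemma quadFormAt_single_add_smul_single [DecidableEq n] {M : Matrix n n ℝ} (hM : M.IsHermitian)
    (i j : n) (r : ℝ) : quadFormAt (Pi.single i 1 + r • Pi.single j 1) M =
      M i i + 2 * r * M i j + r ^ 2 * M j j := by
  have hij : M j i = M i j := by simpa using hM.apply i j
  simp only [quadFormAt_apply, mulVec_add, mulVec_smul, add_dotProduct, dotProduct_add,
    smul_dotProduct, dotProduct_smul, smul_eq_mul, mulVec_single_one, single_one_dotProduct,
    col_apply, hij]
  ring

lemma isClosed_setOf_posSemidef {n : Type*} [Finite n] :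
    IsClosed {M : Matrix n n ℝ | M.PosSemidef} := by
  have := Fintype.ofFinite n
  simp only [posSemidef_iff_quadFormAt_nonneg, isHermitian_iff_isSymm, IsSymm, ofPred_and,
    ofPred_forall]
  exact (isClosed_eq continuous_id.matrix_transpose continuous_id).inter
    (isClosed_iInter fun x ↦ isClosed_le continuous_const (continuous_quadFormAt x))

lemma posDef_of_forall_mem_sphere {M : Matrix n n ℝ} (hM : M.IsHermitian)
    (hpos : ∀ x ∈ Metric.sphere (0 : n → ℝ) 1, 0 < quadFormAt x M) : M.PosDef := by
  refine .of_dotProduct_mulVec_pos hM fun x hx ↦ ?_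
  have hx' : 0 < ‖x‖ := norm_pos_iff.2 hx
  have hunit : 0 < quadFormAt (‖x‖⁻¹ • x) M := hpos _ (by simp [norm_smul, hx'.ne'])
  rw [quadFormAt_smul] at hunit
  exact pos_of_mul_pos_right hunit (by positivity)

lemma eventually_posDef_of_isHermitian {n : Type*} [Finite n] {A : Matrix n n ℝ}
    (hA : A.PosDef) : ∀ᶠ M in 𝓝 A, M.IsHermitian → M.PosDef := by
  have := Fintype.ofFinite n
  have hcont : Continuous fun p : Matrix n n ℝ × (n → ℝ) ↦ quadFormAt p.2 p.1 :=
    continuous_snd.dotProduct (continuous_fst.matrix_mulVec continuous_snd)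
  have hsphere : ∀ᶠ M in 𝓝 A, ∀ x ∈ Metric.sphere (0 : n → ℝ) 1, 0 < quadFormAt x M :=
    (isCompact_sphere _ _).eventually_forall_of_forall_eventually fun x hx ↦
      hcont.continuousAt.eventually (lt_mem_nhds
        (quadFormAt_pos hA (ne_zero_of_mem_unit_sphere ⟨x, hx⟩)))
  filter_upwards [hsphere] with M hM hherm using posDef_of_forall_mem_sphere hherm hM

lemma exists_forall_posDef_smul_one_sub {n : Type*} [Finite n] [DecidableEq n] {X : Type*}
    [TopologicalSpace X] {s : Set X} (hs : IsCompact s) {M : X → Matrix n n ℝ}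
    (hM : ContinuousOn M s) (hherm : ∀ x ∈ s, (M x).IsHermitian) :
    ∃ μ : ℝ, ∀ x ∈ s, (μ • (1 : Matrix n n ℝ) - M x).PosDef := by
  have := Fintype.ofFinite n
  obtain ⟨ε, hε, hball⟩ := Metric.eventually_nhds_iff_ball.1
    (eventually_posDef_of_isHermitian (PosDef.one : (1 : Matrix n n ℝ).PosDef))
  obtain ⟨C, hC⟩ := hs.exists_bound_of_continuousOn hM
  refine ⟨(|C| + 1) / ε, fun x hx ↦ ?_⟩
  have hμ : 0 < (|C| + 1) / ε := by positivity
  set μ := (|C| + 1) / ε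
  have hherm' : (1 - μ⁻¹ • M x).IsHermitian :=
    isHermitian_one.sub ((hherm x hx).smul (.all _))
  have hmem : 1 - μ⁻¹ • M x ∈ Metric.ball 1 ε := by
    rw [mem_ball_iff_norm, sub_sub_cancel_left, norm_neg, norm_smul, norm_inv,
      Real.norm_of_nonneg hμ.le, inv_mul_lt_iff₀ hμ, div_mul_cancel₀ _ hε.ne']
    linarith [hC x hx, le_abs_self C]
  have := (hball _ hmem hherm').smul hμ
  rwa [smul_sub, smul_inv_smul₀ hμ.ne'] at this

lemma matrix_norm_le_norm_of_nonneg_of_le {A B : Matrix n n ℝ} (hB : 0 ≤ B) (hBA : B ≤ A) :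
    ‖B‖ ≤ ‖A‖ := by
  classical
  have hdiag : ∀ i, B i i ≤ ‖A‖ := fun i ↦
    calc B i i ≤ A i i := sub_nonneg.1 (Matrix.le_iff.1 hBA).diag_nonneg
      _ ≤ ‖A i i‖ := le_abs_self _
      _ ≤ ‖A‖ := A.norm_entry_le_entrywise_sup_norm
  have hpolar : ∀ i j (r : ℝ), 0 ≤ B i i + 2 * r * B i j + r ^ 2 * B j j := fun i j r ↦ by
    rw [← quadFormAt_single_add_smul_single hB.posSemidef.isHermitian]
    exact quadFormAt_nonneg hB.posSemidef _
  refine (Matrix.norm_le_iff (norm_nonneg A)).2 fun i j ↦ abs_le.2 ⟨?_, ?_⟩ <;>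
    linarith [hpolar i j 1, hpolar i j (-1), hdiag i, hdiag j]

lemma exists_tendsto_of_antitone_of_nonneg {n : Type*} [Finite n]
    {A : ℕ → Matrix n n ℝ} (hA : Antitone A) (hA₀ : ∀ k, 0 ≤ A k) :
    ∃ B, Tendsto A atTop (𝓝 B) := by
  classical
  have := Fintype.ofFinite n
  have hconv (x : n → ℝ) :
      Tendsto (fun k ↦ quadFormAt x (A k)) atTop (𝓝 (⨅ k, quadFormAt x (A k))) :=
    tendsto_atTop_ciInf ((quadFormAt_mono x).comp_antitone hA)
      ⟨0, forall_mem_range.2 fun k ↦ quadFormAt_nonneg (hA₀ k).posSemidef x⟩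
  let q (r : ℝ) (i j : n) : n → ℝ := Pi.single i 1 + r • Pi.single j 1
  refine ⟨of fun i j ↦ ((⨅ k, quadFormAt (q 1 i j) (A k)) -
    ⨅ k, quadFormAt (q (-1) i j) (A k)) / 4, ?_⟩
  refine tendsto_pi_nhds.2 fun i ↦ tendsto_pi_nhds.2 fun j ↦ ?_
  refine (((hconv (q 1 i j)).sub (hconv (q (-1) i j))).div_const 4).congr fun k ↦ ?_
  have hherm := (hA₀ k).posSemidef.isHermitian
  rw [quadFormAt_single_add_smul_single hherm, quadFormAt_single_add_smul_single hherm]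
  ring

lemma hasDerivWithinAt_quadFormAt {D : ℝ → Matrix n n ℝ} {D' : Matrix n n ℝ} {s : Set ℝ} {t : ℝ}
    (hD : HasDerivWithinAt D D' s t) (x : n → ℝ) :
    HasDerivWithinAt (fun t ↦ quadFormAt x (D t)) (quadFormAt x D') s t :=
  (quadFormAt x).toContinuousLinearMap.hasFDerivAt.comp_hasDerivWithinAt t hD

end PosSemidef

section Lyapunov

variable {n : Type*} [Fintype n] {a b : ℝ}

-- Going backwards in time, positive definiteness is first lost at a time `t` where `D t` is
-- positive semidefinite with a kernel vector `x`; there `s ↦ xᵀ D s x` vanishes at `t` and is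
-- positive right after `t`, so its derivative cannot be negative.
lemma posDef_of_forall_kernel_deriv_neg {D D' : ℝ → Matrix n n ℝ}
    (hD : ∀ t ∈ Icc a b, HasDerivWithinAt D (D' t) (Icc a b) t)
    (hherm : ∀ t ∈ Icc a b, (D t).IsHermitian) (hb : (D b).PosDef)
    (hker : ∀ t ∈ Icc a b, (D t).PosSemidef → ∀ x ≠ 0, D t *ᵥ x = 0 → quadFormAt x (D' t) < 0) :
    ∀ t ∈ Icc a b, (D t).PosDef := by
  classical
  have hcont : ContinuousOn D (Icc a b) := fun t ht ↦ (hD t ht).continuousWithinAt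
  by_contra! hexists
  let U : Set (Matrix n n ℝ) := interior {M | M.IsHermitian → M.PosDef}
  have hU : ∀ t ∈ Icc a b, D t ∈ U ↔ (D t).PosDef := fun t ht ↦
    ⟨fun h ↦ interior_subset h (hherm t ht), fun h ↦
      mem_interior_iff_mem_nhds.2 (eventually_posDef_of_isHermitian h)⟩
  have hcompact : IsCompact (Icc a b ∩ D ⁻¹' Uᶜ) := isCompact_Icc.of_isClosed_subset
    (hcont.preimage_isClosed_of_isClosed isClosed_Icc isOpen_interior.isClosed_compl)
    inter_subset_left
  obtain ⟨t, ⟨ht, htU⟩, hmax⟩ := hcompact.exists_isGreatest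
    (hexists.imp fun t ht ↦ ⟨ht.1, (hU t ht.1).not.2 ht.2⟩)
  have htD : ¬(D t).PosDef := (hU t ht).not.1 htU
  have htb : t < b := ht.2.lt_of_ne (by rintro rfl; exact htD hb)
  have hsub : Ioc t b ⊆ Icc a b := fun s hs ↦ ⟨ht.1.trans hs.1.le, hs.2⟩
  have hafter : ∀ s ∈ Ioc t b, (D s).PosDef := fun s hs ↦ by
    by_contra hs'
    exact hs.1.not_ge (hmax ⟨hsub hs, (hU s (hsub hs)).not.2 hs'⟩)
  have : (𝓝[Ioc t b] t).NeBot := left_nhdsWithin_Ioc_neBot htb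
  have hpsd : (D t).PosSemidef :=
    isClosed_setOf_posSemidef.mem_of_tendsto ((hcont t ht).mono hsub)
      (eventually_mem_nhdsWithin.mono fun s hs ↦ (hafter s hs).posSemidef)
  obtain ⟨x, hx, hDx⟩ : ∃ x ≠ 0, D t *ᵥ x = 0 := by
    rwa [exists_mulVec_eq_zero_iff, ← not_ne_iff, ← hpsd.posDef_iff_det_ne_zero]
  have hslope : ∀ᶠ s in 𝓝[Ioc t b] t, slope (fun s ↦ quadFormAt x (D s)) t s < 0 :=
    (hasDerivWithinAt_quadFormAt ((hD t ht).mono hsub) x).limsup_slope_le' left_notMem_Ioc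
      (hker t ht hpsd x hx hDx)
  obtain ⟨s, hneg, hs⟩ := (hslope.and eventually_mem_nhdsWithin).exists
  rw [slope_def_field, quadFormAt_apply x (D t), hDx, dotProduct_zero, sub_zero] at hneg
  exact hneg.not_gt (div_pos (quadFormAt_pos (hafter s hs) hx) (sub_pos.2 hs.1))

/-- The Lyapunov operator `K ↦ Cᵀ K C + K A + Aᵀ K` of a linear controlled diffusion with drift
matrix `A` and diffusion matrix `C`. -/
def lyapunovMap (A C : Matrix n n ℝ) : Matrix n n ℝ →ₗ[ℝ] Matrix n n ℝ where
  toFun K := Cᵀ * K * C + K * A + Aᵀ * K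
  map_add' K L := by noncomm_ring
  map_smul' r K := by simp only [Matrix.mul_smul, Matrix.smul_mul, RingHom.id_apply, smul_add]

lemma lyapunovMap_apply (A C K : Matrix n n ℝ) :
    lyapunovMap A C K = Cᵀ * K * C + K * A + Aᵀ * K := rfl

lemma transpose_lyapunovMap (A C K : Matrix n n ℝ) :
    (lyapunovMap A C K)ᵀ = lyapunovMap A C Kᵀ := by
  simp only [lyapunovMap_apply, transpose_add, transpose_mul, transpose_transpose, Matrix.mul_assoc]
  abel

lemma isHermitian_lyapunovMap {K : Matrix n n ℝ} (hK : K.IsHermitian) (A C : Matrix n n ℝ) :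
    (lyapunovMap A C K).IsHermitian := by
  rw [isHermitian_iff_isSymm, IsSymm] at hK ⊢
  rw [transpose_lyapunovMap, hK]

lemma continuousOn_lyapunovMap {X : Type*} [TopologicalSpace X] {s : Set X}
    {A C K : X → Matrix n n ℝ} (hA : ContinuousOn A s) (hC : ContinuousOn C s)
    (hK : ContinuousOn K s) : ContinuousOn (fun x ↦ lyapunovMap (A x) (C x) (K x)) s := by
  simp only [lyapunovMap_apply]
  fun_prop

lemma quadFormAt_lyapunovMap_nonneg {K : Matrix n n ℝ} (hK : K.PosSemidef) {x : n → ℝ}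
    (hx : K *ᵥ x = 0) (A C : Matrix n n ℝ) : 0 ≤ quadFormAt x (lyapunovMap A C K) := by
  have hxK : x ᵥ* K = 0 := by
    rw [← mulVec_transpose, (isHermitian_iff_isSymm.1 hK.isHermitian).eq, hx]
  have hKA : quadFormAt x (K * A) = 0 := by
    rw [quadFormAt_apply, ← mulVec_mulVec, dotProduct_mulVec, hxK, zero_dotProduct]
  have hAK : quadFormAt x (Aᵀ * K) = 0 := by
    rw [quadFormAt_apply, ← mulVec_mulVec, hx, mulVec_zero, dotProduct_zero]
  rw [lyapunovMap_apply, map_add, map_add, hKA, hAK, add_zero, add_zero]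
  exact quadFormAt_nonneg (posSemidef_transpose_mul_mul hK C) x

variable {A C S D : ℝ → Matrix n n ℝ}

lemma posDef_of_hasDerivWithinAt_lyapunov
    (hD : ∀ t ∈ Icc a b,
      HasDerivWithinAt D (-(S t + lyapunovMap (A t) (C t) (D t))) (Icc a b) t)
    (hherm : ∀ t ∈ Icc a b, (D t).IsHermitian) (hb : (D b).PosDef)
    (hS : ∀ t ∈ Icc a b, (S t).PosDef) : ∀ t ∈ Icc a b, (D t).PosDef := by
  refine posDef_of_forall_kernel_deriv_neg hD hherm hb fun t ht hpsd x hx hDx ↦ ?_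
  rw [map_neg, map_add, neg_lt_zero]
  exact add_pos_of_pos_of_nonneg (quadFormAt_pos (hS t ht) hx)
    (quadFormAt_lyapunovMap_nonneg hpsd hDx _ _)

-- `D + ε e^{μ (b - t)}` solves a Lyapunov equation with positive definite data as soon as
-- `μ` dominates the image of the identity under the Lyapunov operators.
lemma posSemidef_of_hasDerivWithinAt_lyapunov
    (hA : ContinuousOn A (Icc a b)) (hC : ContinuousOn C (Icc a b))
    (hD : ∀ t ∈ Icc a b,
      HasDerivWithinAt D (-(S t + lyapunovMap (A t) (C t) (D t))) (Icc a b) t)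
    (hherm : ∀ t ∈ Icc a b, (D t).IsHermitian) (hb : (D b).PosSemidef)
    (hS : ∀ t ∈ Icc a b, (S t).PosSemidef) : ∀ t ∈ Icc a b, (D t).PosSemidef := by
  classical
  obtain ⟨μ, hμ⟩ := exists_forall_posDef_smul_one_sub (isCompact_Icc (a := a) (b := b))
    (continuousOn_lyapunovMap hA hC continuousOn_const)
    (fun t _ ↦ isHermitian_lyapunovMap isHermitian_one (A t) (C t))
  let e (t : ℝ) : ℝ := Real.exp (μ * (b - t))
  have he (t : ℝ) : HasDerivAt e (-(μ * e t)) t := by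
    refine (((hasDerivAt_id t).const_sub b).const_mul μ).exp.congr_deriv ?_
    simp only [e, id]
    ring
  have hperturbed {ε : ℝ} (hε : 0 < ε) :
      ∀ t ∈ Icc a b, (D t + (ε * e t) • (1 : Matrix n n ℝ)).PosDef := by
    refine posDef_of_hasDerivWithinAt_lyapunov (A := A) (C := C)
      (S := fun t ↦ S t + (ε * e t) • (μ • 1 - lyapunovMap (A t) (C t) 1)) (fun t ht ↦ ?_)
      (fun t ht ↦ (hherm t ht).add (isHermitian_one.smul (.all _)))
      (PosDef.posSemidef_add hb (PosDef.one.smul (by positivity)))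
      (fun t ht ↦ PosDef.posSemidef_add (hS t ht) ((hμ t ht).smul (by positivity)))
    refine ((hD t ht).add (((he t).const_mul ε).smul_const
      (1 : Matrix n n ℝ)).hasDerivWithinAt).congr_deriv ?_
    rw [map_add, map_smul]
    module
  intro t ht
  have hlim : Tendsto (fun ε : ℝ ↦ D t + (ε * e t) • (1 : Matrix n n ℝ)) (𝓝[>] 0) (𝓝 (D t)) := by
    have : Continuous fun ε : ℝ ↦ D t + (ε * e t) • (1 : Matrix n n ℝ) := by fun_prop
    simpa using (this.tendsto 0).mono_left nhdsWithin_le_nhds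
  exact isClosed_setOf_posSemidef.mem_of_tendsto hlim
    (eventually_mem_nhdsWithin.mono fun ε hε ↦ (hperturbed hε t ht).posSemidef)

lemma exists_isHermitian_hasDerivWithinAt_lyapunov (hab : a ≤ b) (hA : ContinuousOn A (Icc a b))
    (hC : ContinuousOn C (Icc a b)) (hS : ContinuousOn S (Icc a b))
    (hSherm : ∀ t ∈ Icc a b, (S t).IsHermitian) {P : Matrix n n ℝ} (hP : P.IsHermitian) :
    ∃ X : ℝ → Matrix n n ℝ, X b = P ∧ (∀ t, (X t).IsHermitian) ∧ ∀ t ∈ Icc a b,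
      HasDerivWithinAt X (-(S t + lyapunovMap (A t) (C t) (X t))) (Icc a b) t := by
  have hL : ContinuousOn (fun t ↦ (lyapunovMap (A t) (C t)).toContinuousLinearMap) (Icc a b) := by
    refine continuousOn_clm_apply.2 fun K ↦ ?_
    exact continuousOn_lyapunovMap hA hC continuousOn_const
  obtain ⟨X, hXb, hX⟩ := exists_hasDerivWithinAt_affine hab hL.neg hS.neg P
  let sym : Matrix n n ℝ →ₗ[ℝ] Matrix n n ℝ :=
    (2⁻¹ : ℝ) • (LinearMap.id + (transposeLinearEquiv n n ℝ ℝ).toLinearMap)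
  have hsym (K : Matrix n n ℝ) : sym K = (2⁻¹ : ℝ) • (K + Kᵀ) := rfl
  have hsym_herm {K : Matrix n n ℝ} (hK : K.IsHermitian) : sym K = K := by
    rw [hsym, (isHermitian_iff_isSymm.1 hK).eq]
    module
  have hsym_lyap (t : ℝ) (K : Matrix n n ℝ) :
      sym (lyapunovMap (A t) (C t) K) = lyapunovMap (A t) (C t) (sym K) := by
    rw [hsym, hsym, map_smul, map_add, transpose_lyapunovMap]
  refine ⟨fun t ↦ sym (X t), (congrArg sym hXb).trans (hsym_herm hP), fun t ↦ ?_, fun t ht ↦ ?_⟩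
  · simp only [isHermitian_iff_isSymm, IsSymm, hsym, transpose_smul, transpose_add,
      transpose_transpose, add_comm]
  · refine (sym.toContinuousLinearMap.hasFDerivAt.comp_hasDerivWithinAt t (hX t ht)).congr_deriv ?_
    calc sym (-lyapunovMap (A t) (C t) (X t) + -S t)
        = -(sym (S t) + sym (lyapunovMap (A t) (C t) (X t))) := by
          rw [map_add, map_neg, map_neg, neg_add_rev]
      _ = -(S t + lyapunovMap (A t) (C t) (sym (X t))) := by rw [hsym_lyap, hsym_herm (hSherm t ht)]

end Lyapunov

section CompletingTheSquare

variable {m n : Type*} [Fintype m]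

lemma transpose_mul_mul_add_inv_mul [DecidableEq m] {R : Matrix m m ℝ} (hR : R.IsHermitian)
    (hu : IsUnit R) (M Θ : Matrix m n ℝ) :
    (Θ + R⁻¹ * M)ᵀ * R * (Θ + R⁻¹ * M) =
      Θᵀ * R * Θ + Θᵀ * M + Mᵀ * Θ + Mᵀ * R⁻¹ * M := by
  have hdet : IsUnit R.det := (isUnit_iff_isUnit_det R).1 hu
  have hleft : (R⁻¹ * M)ᵀ * R = Mᵀ := by
    rw [transpose_mul, transpose_nonsing_inv, (isHermitian_iff_isSymm.1 hR).eq,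
      nonsing_inv_mul_cancel_right _ _ hdet]
  rw [transpose_add, Matrix.add_mul, hleft, Matrix.add_mul, Matrix.mul_add, Matrix.mul_add,
    Matrix.mul_assoc Θᵀ R (R⁻¹ * M), mul_nonsing_inv_cancel_left _ _ hdet, ← Matrix.mul_assoc Mᵀ]
  abel

end CompletingTheSquare

/-- The coefficients, at a fixed time, of a linear-quadratic stochastic control problem with state
space `ℝⁿ` and control space `ℝᵐ`: state equation `dX = (bx X + b₁ u) dt + (σx X + σ₁ u) dW`,
running cost `xᵀ Q x + 2 uᵀ I x + uᵀ N u`, discount rate `ρ`. -/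
structure LQCoeff (m n : Type*) where
  Q : Matrix n n ℝ
  bx : Matrix n n ℝ
  σx : Matrix n n ℝ
  b₁ : Matrix n m ℝ
  σ₁ : Matrix n m ℝ
  I : Matrix m n ℝ
  N : Matrix m m ℝ
  ρ : ℝ

namespace LQCoeff

open scoped MatrixOrder

variable {m n : Type*}

/-- Continuity on a set of a family of coefficients, meaning continuity of each coefficient. -/
structure IsContinuousOn {X : Type*} [TopologicalSpace X] (c : X → LQCoeff m n) (s : Set X) :
    Prop where
  Q : ContinuousOn (fun x ↦ (c x).Q) s
  bx : ContinuousOn (fun x ↦ (c x).bx) s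
  σx : ContinuousOn (fun x ↦ (c x).σx) s
  b₁ : ContinuousOn (fun x ↦ (c x).b₁) s
  σ₁ : ContinuousOn (fun x ↦ (c x).σ₁) s
  I : ContinuousOn (fun x ↦ (c x).I) s
  N : ContinuousOn (fun x ↦ (c x).N) s
  ρ : ContinuousOn (fun x ↦ (c x).ρ) s

lemma IsContinuousOn.comp {X Y : Type*} [TopologicalSpace X] [TopologicalSpace Y]
    {c : X → LQCoeff m n} {s : Set X} (hc : IsContinuousOn c s) {f : Y → X} {r : Set Y}
    (hf : ContinuousOn f r) (hmaps : MapsTo f r s) : IsContinuousOn (fun y ↦ c (f y)) r :=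
  ⟨hc.Q.comp hf hmaps, hc.bx.comp hf hmaps, hc.σx.comp hf hmaps, hc.b₁.comp hf hmaps,
    hc.σ₁.comp hf hmaps, hc.I.comp hf hmaps, hc.N.comp hf hmaps, hc.ρ.comp hf hmaps⟩

section Feedback

variable [Fintype m]

/-- The running cost, as a quadratic form of the state, of the linear feedback `u = Θ x`. -/
def runningCost (c : LQCoeff m n) (Θ : Matrix m n ℝ) : Matrix n n ℝ :=
  c.Q + c.Iᵀ * Θ + Θᵀ * c.I + Θᵀ * c.N * Θ

/-- The diffusion matrix of the state under the linear feedback `u = Θ x`. -/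
def closedLoopDiffusion (c : LQCoeff m n) (Θ : Matrix m n ℝ) : Matrix n n ℝ :=
  c.σx + c.σ₁ * Θ

/-- The drift matrix of the state under the linear feedback `u = Θ x`; the shift by `-(ρ / 2)`
absorbs the discount. -/
noncomputable def closedLoopDrift [DecidableEq n] (c : LQCoeff m n) (Θ : Matrix m n ℝ) :
    Matrix n n ℝ :=
  c.bx + c.b₁ * Θ - (c.ρ / 2) • (1 : Matrix n n ℝ)

variable {X : Type*} [TopologicalSpace X] {s : Set X} {c : X → LQCoeff m n}
  {Θ : X → Matrix m n ℝ}

lemma IsContinuousOn.runningCost (hc : IsContinuousOn c s) (hΘ : ContinuousOn Θ s) :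
    ContinuousOn (fun x ↦ (c x).runningCost (Θ x)) s := by
  obtain ⟨hQ, -, -, -, -, hI, hN, -⟩ := hc
  unfold LQCoeff.runningCost
  fun_prop

lemma IsContinuousOn.closedLoopDiffusion (hc : IsContinuousOn c s) (hΘ : ContinuousOn Θ s) :
    ContinuousOn (fun x ↦ (c x).closedLoopDiffusion (Θ x)) s :=
  hc.σx.add (continuousOn_matrix_mul hc.σ₁ hΘ)

lemma IsContinuousOn.closedLoopDrift [DecidableEq n] (hc : IsContinuousOn c s)
    (hΘ : ContinuousOn Θ s) : ContinuousOn (fun x ↦ (c x).closedLoopDrift (Θ x)) s :=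
  (hc.bx.add (continuousOn_matrix_mul hc.b₁ hΘ)).sub
    ((hc.ρ.div_const 2).smul continuousOn_const)

end Feedback

/-- Convexity of the running cost jointly in state and control, strict in the control:
`0 < N` and the Schur complement `Q - Iᵀ N⁻¹ I` is positive semidefinite. -/
structure IsConvex [Fintype m] [DecidableEq m] (c : LQCoeff m n) : Prop where
  posDef_N : c.N.PosDef
  posSemidef_schur : (c.Q - c.Iᵀ * c.N⁻¹ * c.I).PosSemidef

lemma IsConvex.posSemidef_runningCost [Fintype m] [Finite n] [DecidableEq m]
    {c : LQCoeff m n} (hc : c.IsConvex) (Θ : Matrix m n ℝ) : (c.runningCost Θ).PosSemidef := by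
  have hsq := transpose_mul_mul_add_inv_mul hc.posDef_N.isHermitian hc.posDef_N.isUnit c.I Θ
  have hsum : c.runningCost Θ =
      (c.Q - c.Iᵀ * c.N⁻¹ * c.I) + (Θ + c.N⁻¹ * c.I)ᵀ * c.N * (Θ + c.N⁻¹ * c.I) := by
    rw [hsq, runningCost]
    abel
  rw [hsum]
  exact hc.posSemidef_schur.add (posSemidef_transpose_mul_mul hc.posDef_N.posSemidef _)

section Bellman

variable [Fintype n]

/-- The matrix `N + σ₁ᵀ K σ₁` weighting the control in the Hamiltonian with adjoint `K`. -/
def controlWeight (c : LQCoeff m n) (K : Matrix n n ℝ) : Matrix m m ℝ :=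
  c.N + c.σ₁ᵀ * K * c.σ₁

lemma posDef_controlWeight [Finite m] {c : LQCoeff m n} {K : Matrix n n ℝ}
    (hN : c.N.PosDef) (hK : K.PosSemidef) : (c.controlWeight K).PosDef :=
  hN.add_posSemidef (posSemidef_transpose_mul_mul hK c.σ₁)

variable [Fintype m]

/-- The affine Lyapunov operator whose backward equation `K' = -bellman Θ K` is solved by the cost
of the linear feedback `u = Θ x`. -/
noncomputable def bellman [DecidableEq n] (c : LQCoeff m n) (Θ : Matrix m n ℝ)
    (K : Matrix n n ℝ) : Matrix n n ℝ :=
  c.runningCost Θ + lyapunovMap (c.closedLoopDrift Θ) (c.closedLoopDiffusion Θ) K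

lemma IsContinuousOn.bellman [DecidableEq n] {X : Type*} [TopologicalSpace X]
    {s : Set X} {c : X → LQCoeff m n} {Θ : X → Matrix m n ℝ} {K : X → Matrix n n ℝ}
    (hc : IsContinuousOn c s) (hΘ : ContinuousOn Θ s) (hK : ContinuousOn K s) :
    ContinuousOn (fun x ↦ (c x).bellman (Θ x) (K x)) s :=
  (hc.runningCost hΘ).add
    (continuousOn_lyapunovMap (hc.closedLoopDrift hΘ) (hc.closedLoopDiffusion hΘ) hK)

/-- The matrix coupling control and state in the Hamiltonian with adjoint `K`. -/
def crossWeight (c : LQCoeff m n) (K : Matrix n n ℝ) : Matrix m n ℝ :=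
  c.I + c.σ₁ᵀ * K * c.σx + c.b₁ᵀ * K

variable [DecidableEq m]

/-- The Riccati operator: the Riccati equation is `K' = -riccati K`. -/
noncomputable def riccati (c : LQCoeff m n) (K : Matrix n n ℝ) : Matrix n n ℝ :=
  c.Q + c.σxᵀ * K * c.σx + K * c.bx + c.bxᵀ * K - c.ρ • K -
    (c.crossWeight K)ᵀ * (c.controlWeight K)⁻¹ * c.crossWeight K

/-- The feedback minimizing `Θ ↦ bellman Θ K`. -/
noncomputable def greedy (c : LQCoeff m n) (K : Matrix n n ℝ) : Matrix m n ℝ :=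
  -((c.controlWeight K)⁻¹ * c.crossWeight K)

lemma IsContinuousOn.greedy {X : Type*} [TopologicalSpace X] {s : Set X}
    {c : X → LQCoeff m n} {K : X → Matrix n n ℝ} (hc : IsContinuousOn c s)
    (hN : ∀ x ∈ s, (c x).N.PosDef) (hK : ContinuousOn K s)
    (hKpsd : ∀ x ∈ s, (K x).PosSemidef) :
    ContinuousOn (fun x ↦ (c x).greedy (K x)) s := by
  obtain ⟨-, -, hσx, hb₁, hσ₁, hI, hNc, -⟩ := hc
  have hR : ContinuousOn (fun x ↦ ((c x).controlWeight (K x))⁻¹) s := by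
    refine continuousOn_matrix_inv ?_
      fun x hx ↦ (posDef_controlWeight (hN x hx) (hKpsd x hx)).isUnit
    unfold controlWeight
    fun_prop
  unfold LQCoeff.greedy crossWeight
  fun_prop

variable [DecidableEq n] {c : LQCoeff m n} {K : Matrix n n ℝ}

lemma bellman_eq_riccati_add (hN : c.N.PosDef) (hK : K.PosSemidef) (Θ : Matrix m n ℝ) :
    c.bellman Θ K =
      c.riccati K + (Θ - c.greedy K)ᵀ * c.controlWeight K * (Θ - c.greedy K) := by
  have hR := posDef_controlWeight hN hK
  rw [greedy, sub_neg_eq_add, transpose_mul_mul_add_inv_mul hR.isHermitian hR.isUnit, riccati]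
  generalize (c.crossWeight K)ᵀ * (c.controlWeight K)⁻¹ * c.crossWeight K = Z
  simp only [bellman, runningCost, closedLoopDrift, closedLoopDiffusion, lyapunovMap_apply,
    controlWeight, crossWeight, transpose_add, transpose_sub, transpose_mul, transpose_smul,
    transpose_one, transpose_transpose, (isHermitian_iff_isSymm.1 hK.isHermitian).eq,
    Matrix.add_mul, Matrix.mul_add, Matrix.sub_mul, Matrix.mul_sub, Matrix.smul_mul,
    Matrix.mul_smul, Matrix.one_mul, Matrix.mul_one, Matrix.mul_assoc]
  module

lemma bellman_greedy (hN : c.N.PosDef) (hK : K.PosSemidef) :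
    c.bellman (c.greedy K) K = c.riccati K := by
  rw [bellman_eq_riccati_add hN hK, sub_self, Matrix.mul_zero, add_zero]

lemma riccati_le_bellman (hN : c.N.PosDef) (hK : K.PosSemidef) (Θ : Matrix m n ℝ) :
    c.riccati K ≤ c.bellman Θ K := by
  rw [bellman_eq_riccati_add hN hK]
  exact le_add_of_nonneg_right
    (posSemidef_transpose_mul_mul (posDef_controlWeight hN hK).posSemidef _).nonneg

end Bellman

end LQCoeff

section BackwardSolution

open scoped MatrixOrder

variable {m n : Type*}

/-- `K` is a positive semidefinite solution on `[a, b]` of the backward equation `K' = -F t K` with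
terminal value `P`; derivatives at the endpoints are one-sided. -/
structure IsBackwardSolution (F : ℝ → Matrix n n ℝ → Matrix n n ℝ) (a b : ℝ) (P : Matrix n n ℝ)
    (K : ℝ → Matrix n n ℝ) : Prop where
  terminal : K b = P
  posSemidef : ∀ t ∈ Icc a b, (K t).PosSemidef
  hasDerivWithinAt : ∀ t ∈ Icc a b, HasDerivWithinAt K (-F t (K t)) (Icc a b) t

namespace IsBackwardSolution

lemma continuousOn [Finite n] {F : ℝ → Matrix n n ℝ → Matrix n n ℝ} {a b : ℝ} {P : Matrix n n ℝ}
    {K : ℝ → Matrix n n ℝ} (hK : IsBackwardSolution F a b P K) : ContinuousOn K (Icc a b) := by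
  have := Fintype.ofFinite n
  exact fun t ht ↦ (hK.hasDerivWithinAt t ht).continuousWithinAt

variable [Fintype m] [Fintype n] {F₁ F₂ : ℝ → Matrix n n ℝ → Matrix n n ℝ} {a b : ℝ}
  {P : Matrix n n ℝ} {K₁ K₂ : ℝ → Matrix n n ℝ} {c : ℝ → LQCoeff m n}

lemma le_of_bellman_le_of_le_bellman [DecidableEq n] {Θ : ℝ → Matrix m n ℝ}
    (hc : LQCoeff.IsContinuousOn c (Icc a b)) (hΘ : ContinuousOn Θ (Icc a b))
    (hK₁ : IsBackwardSolution F₁ a b P K₁) (hK₂ : IsBackwardSolution F₂ a b P K₂)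
    (h₁ : ∀ t ∈ Icc a b, (c t).bellman (Θ t) (K₁ t) ≤ F₁ t (K₁ t))
    (h₂ : ∀ t ∈ Icc a b, F₂ t (K₂ t) ≤ (c t).bellman (Θ t) (K₂ t)) :
    ∀ t ∈ Icc a b, K₂ t ≤ K₁ t := by
  refine posSemidef_of_hasDerivWithinAt_lyapunov (D := K₁ - K₂)
    (S := fun t ↦ (F₁ t (K₁ t) - (c t).bellman (Θ t) (K₁ t)) +
      ((c t).bellman (Θ t) (K₂ t) - F₂ t (K₂ t)))
    (hc.closedLoopDrift hΘ) (hc.closedLoopDiffusion hΘ) (fun t ht ↦ ?_)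
    (fun t ht ↦ (hK₁.posSemidef t ht).isHermitian.sub (hK₂.posSemidef t ht).isHermitian)
    ?_ (fun t ht ↦ (h₁ t ht).add (h₂ t ht))
  · refine ((hK₁.hasDerivWithinAt t ht).sub (hK₂.hasDerivWithinAt t ht)).congr_deriv ?_
    rw [Pi.sub_apply, map_sub, LQCoeff.bellman, LQCoeff.bellman]
    abel
  · rw [Pi.sub_apply, hK₁.terminal, hK₂.terminal, sub_self]
    exact .zero

variable [DecidableEq m]

lemma le_of_le_bellman_greedy [DecidableEq n] (hc : LQCoeff.IsContinuousOn c (Icc a b))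
    (hN : ∀ t ∈ Icc a b, (c t).N.PosDef) (hK₁ : IsBackwardSolution F₁ a b P K₁)
    (hK₂ : IsBackwardSolution F₂ a b P K₂)
    (h₁ : ∀ t ∈ Icc a b, (c t).riccati (K₁ t) ≤ F₁ t (K₁ t))
    (h₂ : ∀ t ∈ Icc a b, F₂ t (K₂ t) ≤ (c t).bellman ((c t).greedy (K₁ t)) (K₂ t)) :
    ∀ t ∈ Icc a b, K₂ t ≤ K₁ t := by
  refine hK₁.le_of_bellman_le_of_le_bellman hc
    (hc.greedy hN hK₁.continuousOn hK₁.posSemidef) hK₂ (fun t ht ↦ ?_) h₂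
  rw [LQCoeff.bellman_greedy (hN t ht) (hK₁.posSemidef t ht)]
  exact h₁ t ht

lemma eqOn_of_riccati (hc : LQCoeff.IsContinuousOn c (Icc a b))
    (hN : ∀ t ∈ Icc a b, (c t).N.PosDef)
    (hK₁ : IsBackwardSolution (fun t ↦ (c t).riccati) a b P K₁)
    (hK₂ : IsBackwardSolution (fun t ↦ (c t).riccati) a b P K₂) : EqOn K₁ K₂ (Icc a b) := by
  classical
  have hle {K L : ℝ → Matrix n n ℝ} (hK : IsBackwardSolution (fun t ↦ (c t).riccati) a b P K)
      (hL : IsBackwardSolution (fun t ↦ (c t).riccati) a b P L) : ∀ t ∈ Icc a b, L t ≤ K t :=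
    hK.le_of_le_bellman_greedy hc hN hL (fun _ _ ↦ le_rfl) fun t ht ↦
      LQCoeff.riccati_le_bellman (hN t ht) (hL.posSemidef t ht) _
  exact fun t ht ↦ le_antisymm (hle hK₂ hK₁ t ht) (hle hK₁ hK₂ t ht)

end IsBackwardSolution

variable [Fintype m] [Fintype n] [DecidableEq m] {a b : ℝ} {P : Matrix n n ℝ}
  {c : ℝ → LQCoeff m n}

section PolicyIteration

variable [DecidableEq n]

lemma exists_isBackwardSolution_bellman {Θ : ℝ → Matrix m n ℝ} (hab : a ≤ b)
    (hc : LQCoeff.IsContinuousOn c (Icc a b)) (hconv : ∀ t ∈ Icc a b, (c t).IsConvex)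
    (hP : P.PosSemidef) (hΘ : ContinuousOn Θ (Icc a b)) :
    ∃ K, IsBackwardSolution (fun t ↦ (c t).bellman (Θ t)) a b P K := by
  have hS : ∀ t ∈ Icc a b, ((c t).runningCost (Θ t)).PosSemidef := fun t ht ↦
    (hconv t ht).posSemidef_runningCost _
  obtain ⟨K, hKb, hherm, hK⟩ := exists_isHermitian_hasDerivWithinAt_lyapunov hab
    (hc.closedLoopDrift hΘ) (hc.closedLoopDiffusion hΘ) (hc.runningCost hΘ)
    (fun t ht ↦ (hS t ht).isHermitian) hP.isHermitian
  have hpsd := posSemidef_of_hasDerivWithinAt_lyapunov (hc.closedLoopDrift hΘ)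
    (hc.closedLoopDiffusion hΘ) hK (fun t _ ↦ hherm t) (hKb ▸ hP) hS
  exact ⟨K, hKb, hpsd, hK⟩

/-- A run of policy iteration: `X (k + 1)` is the cost of the feedback that is greedy with respect
to `X k`, starting from the cost `X 0` of the zero feedback. -/
structure IsPolicyIteration (c : ℝ → LQCoeff m n) (a b : ℝ) (P : Matrix n n ℝ)
    (X : ℕ → ℝ → Matrix n n ℝ) : Prop where
  zero : IsBackwardSolution (fun t ↦ (c t).bellman 0) a b P (X 0)
  succ : ∀ k, IsBackwardSolution (fun t ↦ (c t).bellman ((c t).greedy (X k t))) a b P (X (k + 1))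

lemma exists_isPolicyIteration (hab : a ≤ b) (hc : LQCoeff.IsContinuousOn c (Icc a b))
    (hconv : ∀ t ∈ Icc a b, (c t).IsConvex) (hP : P.PosSemidef) :
    ∃ X, IsPolicyIteration c a b P X := by
  choose! cost hcost using fun (Θ : ℝ → Matrix m n ℝ) (hΘ : ContinuousOn Θ (Icc a b)) ↦
    exists_isBackwardSolution_bellman hab hc hconv hP hΘ
  let improve (K : ℝ → Matrix n n ℝ) : ℝ → Matrix n n ℝ := cost fun t ↦ (c t).greedy (K t)
  let X (k : ℕ) : ℝ → Matrix n n ℝ := improve^[k] (cost 0)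
  have hzero : IsBackwardSolution (fun t ↦ (c t).bellman 0) a b P (X 0) :=
    hcost 0 continuousOn_const
  have himprove {F K} (hK : IsBackwardSolution F a b P K) :
      IsBackwardSolution (fun t ↦ (c t).bellman ((c t).greedy (K t))) a b P (improve K) :=
    hcost _ (hc.greedy (fun t ht ↦ (hconv t ht).posDef_N) hK.continuousOn hK.posSemidef)
  have hX_succ (k : ℕ) : X (k + 1) = improve (X k) := Function.iterate_succ_apply' _ _ _
  have hsol (k : ℕ) : ∃ F, IsBackwardSolution F a b P (X k) := by
    induction k with
    | zero => exact ⟨_, hzero⟩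
    | succ k ih => exact ih.elim fun _ hk ↦ ⟨_, hX_succ k ▸ himprove hk⟩
  exact ⟨X, hzero, fun k ↦ hX_succ k ▸ himprove (hsol k).choose_spec⟩

namespace IsPolicyIteration

variable {X : ℕ → ℝ → Matrix n n ℝ}

lemma exists_isBackwardSolution (hX : IsPolicyIteration c a b P X) (k : ℕ) :
    ∃ Θ : ℝ → Matrix m n ℝ, IsBackwardSolution (fun t ↦ (c t).bellman (Θ t)) a b P (X k) := by
  cases k with
  | zero => exact ⟨0, hX.zero⟩
  | succ k => exact ⟨_, hX.succ k⟩

lemma antitone (hX : IsPolicyIteration c a b P X) (hc : LQCoeff.IsContinuousOn c (Icc a b))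
    (hN : ∀ t ∈ Icc a b, (c t).N.PosDef) {t : ℝ} (ht : t ∈ Icc a b) : Antitone (X · t) := by
  refine antitone_nat_of_succ_le fun k ↦ ?_
  obtain ⟨Θ, hΘ⟩ := hX.exists_isBackwardSolution k
  exact hΘ.le_of_le_bellman_greedy hc hN (hX.succ k)
    (fun s hs ↦ LQCoeff.riccati_le_bellman (hN s hs) (hΘ.posSemidef s hs) _)
    (fun _ _ ↦ le_rfl) t ht

lemma posSemidef (hX : IsPolicyIteration c a b P X) (k : ℕ) :
    ∀ t ∈ Icc a b, (X k t).PosSemidef :=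
  (hX.exists_isBackwardSolution k).choose_spec.posSemidef

lemma exists_tendsto (hX : IsPolicyIteration c a b P X)
    (hc : LQCoeff.IsContinuousOn c (Icc a b)) (hN : ∀ t ∈ Icc a b, (c t).N.PosDef) :
    ∃ Y : ℝ → Matrix n n ℝ, ∀ t ∈ Icc a b, Tendsto (X · t) atTop (𝓝 (Y t)) := by
  choose! Y hY using fun t (ht : t ∈ Icc a b) ↦ exists_tendsto_of_antitone_of_nonneg
    (hX.antitone hc hN ht) fun k ↦ (hX.posSemidef k t ht).nonneg
  exact ⟨Y, hY⟩

lemma exists_isCompact_forall_mem (hX : IsPolicyIteration c a b P X)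
    (hc : LQCoeff.IsContinuousOn c (Icc a b)) (hN : ∀ t ∈ Icc a b, (c t).N.PosDef) :
    ∃ U : Set (Matrix n n ℝ), IsCompact U ∧ (∀ M ∈ U, M.PosSemidef) ∧
      ∀ k, ∀ t ∈ Icc a b, X k t ∈ U := by
  obtain ⟨B, hB⟩ := isCompact_Icc.exists_bound_of_continuousOn hX.zero.continuousOn
  refine ⟨{M | M.PosSemidef} ∩ Metric.closedBall 0 B,
    (isCompact_closedBall 0 B).inter_left isClosed_setOf_posSemidef, fun M hM ↦ hM.1,
    fun k t ht ↦ ⟨hX.posSemidef k t ht, mem_closedBall_zero_iff.2 ?_⟩⟩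
  calc ‖X k t‖ ≤ ‖X 0 t‖ := matrix_norm_le_norm_of_nonneg_of_le (hX.posSemidef k t ht).nonneg
        (hX.antitone hc hN ht k.zero_le)
    _ ≤ B := hB t ht

lemma isBackwardSolution_of_tendsto (hX : IsPolicyIteration c a b P X) (hab : a ≤ b)
    (hc : LQCoeff.IsContinuousOn c (Icc a b)) (hN : ∀ t ∈ Icc a b, (c t).N.PosDef)
    {Y : ℝ → Matrix n n ℝ} (hY : ∀ t ∈ Icc a b, Tendsto (X · t) atTop (𝓝 (Y t))) :
    IsBackwardSolution (fun t ↦ (c t).riccati) a b P Y := by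
  choose Θ hΘ using hX.exists_isBackwardSolution
  obtain ⟨U, hU, hUpsd, hXU⟩ := hX.exists_isCompact_forall_mem hc hN
  let V := Icc a b ×ˢ U ×ˢ U
  have hcV : LQCoeff.IsContinuousOn (fun p : ℝ × Matrix n n ℝ × Matrix n n ℝ ↦ c p.1) V :=
    hc.comp continuousOn_fst fun p hp ↦ hp.1
  have hgreedy : ContinuousOn
      (fun p : ℝ × Matrix n n ℝ × Matrix n n ℝ ↦ (c p.1).greedy p.2.1) V :=
    hcV.greedy (fun p hp ↦ hN p.1 hp.1) (by fun_prop) fun p hp ↦ hUpsd p.2.1 hp.2.1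
  have hderiv := hasDerivWithinAt_of_recursion_tendsto
    (H := fun t K L ↦ -(c t).bellman ((c t).greedy K) L) hU
    (hcV.bellman hgreedy (by fun_prop)).neg hXU (fun k ↦ (hΘ k).continuousOn)
    (fun k ↦ (hX.succ k).hasDerivWithinAt) hY
  have hYpsd : ∀ t ∈ Icc a b, (Y t).PosSemidef := fun t ht ↦
    isClosed_setOf_posSemidef.mem_of_tendsto (hY t ht) (.of_forall fun k ↦ hX.posSemidef k t ht)
  refine ⟨tendsto_nhds_unique (hY b (right_mem_Icc.2 hab)) ?_, hYpsd, fun t ht ↦ ?_⟩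
  · simp only [(hΘ _).terminal, tendsto_const_nhds]
  · rw [← LQCoeff.bellman_greedy (hN t ht) (hYpsd t ht)]
    exact hderiv t ht

end IsPolicyIteration

end PolicyIteration

theorem riccati_ODE_K_wellposed_general (hab : a ≤ b) (hc : LQCoeff.IsContinuousOn c (Icc a b))
    (hconv : ∀ t ∈ Icc a b, (c t).IsConvex) (hP : P.PosSemidef) :
    ∃ K, IsBackwardSolution (fun t ↦ (c t).riccati) a b P K ∧
      ∀ K', IsBackwardSolution (fun t ↦ (c t).riccati) a b P K' → EqOn K' K (Icc a b) := by
  classical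
  have hN : ∀ t ∈ Icc a b, (c t).N.PosDef := fun t ht ↦ (hconv t ht).posDef_N
  obtain ⟨X, hX⟩ := exists_isPolicyIteration hab hc hconv hP
  obtain ⟨K, hXK⟩ := hX.exists_tendsto hc hN
  have hK := hX.isBackwardSolution_of_tendsto hab hc hN hXK
  exact ⟨K, hK, fun K' hK' ↦ hK'.eqOn_of_riccati hc hN hK⟩

end BackwardSolution

/-- Well-posedness of the matrix Riccati ODE for `K` (Step 6(i)): existence and uniqueness
(on `[0,T]`) of a bounded, continuously differentiable, positive-semidefinite symmetric
solution with terminal condition `K_T = P`. -/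
theorem riccati_ODE_K_wellposed
    (d d₁ : ℕ) (hd : 1 ≤ d) (hd₁ : 1 ≤ d₁)
    (T ρ δ : ℝ) (hT : 0 < T) (hρ : 0 ≤ ρ) (hδ : 0 < δ)
    (Q bx σx : ℝ → Matrix (Fin d) (Fin d) ℝ)
    (b₁ σ₁ : ℝ → Matrix (Fin d) (Fin d₁) ℝ)
    (I : ℝ → Matrix (Fin d₁) (Fin d) ℝ)
    (N : ℝ → Matrix (Fin d₁) (Fin d₁) ℝ)
    -- continuity of the coefficients on [0,T]
    (hQc : ContinuousOn Q (Icc 0 T)) (hbxc : ContinuousOn bx (Icc 0 T))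
    (hσxc : ContinuousOn σx (Icc 0 T)) (hb₁c : ContinuousOn b₁ (Icc 0 T))
    (hσ₁c : ContinuousOn σ₁ (Icc 0 T)) (hIc : ContinuousOn I (Icc 0 T))
    (hNc : ContinuousOn N (Icc 0 T))
    -- boundedness of the coefficients on [0,T]
    (hbdd : ∃ C : ℝ, ∀ t ∈ Icc (0 : ℝ) T,
      ‖Q t‖ ≤ C ∧ ‖bx t‖ ≤ C ∧ ‖σx t‖ ≤ C ∧ ‖b₁ t‖ ≤ C ∧ ‖σ₁ t‖ ≤ C ∧ ‖I t‖ ≤ C ∧ ‖N t‖ ≤ C)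
    -- pointwise structural conditions
    (hQ : ∀ t ∈ Icc (0 : ℝ) T, (Q t).PosSemidef)
    (hN : ∀ t ∈ Icc (0 : ℝ) T, (N t).IsHermitian ∧
      (N t - δ • (1 : Matrix (Fin d₁) (Fin d₁) ℝ)).PosSemidef)
    (hQI : ∀ t ∈ Icc (0 : ℝ) T, (Q t - (I t)ᵀ * (N t)⁻¹ * (I t)).PosSemidef)
    (P : Matrix (Fin d) (Fin d) ℝ) (hP : P.PosSemidef) :
    ∃ K : ℝ → Matrix (Fin d) (Fin d) ℝ,
      ((∀ t ∈ Icc (0 : ℝ) T, (K t).PosSemidef) ∧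
        ContinuousOn K (Icc 0 T) ∧
        (∃ C : ℝ, ∀ t ∈ Icc (0 : ℝ) T, ‖K t‖ ≤ C) ∧
        K T = P ∧
        ∀ t ∈ Icc (0 : ℝ) T,
          HasDerivWithinAt K
            (-(Q t + (σx t)ᵀ * K t * σx t + K t * bx t + (bx t)ᵀ * K t - ρ • K t -
              (I t + (σ₁ t)ᵀ * K t * σx t + (b₁ t)ᵀ * K t)ᵀ *
                (N t + (σ₁ t)ᵀ * K t * σ₁ t)⁻¹ *
                (I t + (σ₁ t)ᵀ * K t * σx t + (b₁ t)ᵀ * K t)))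
            (Icc 0 T) t) ∧
      ∀ K' : ℝ → Matrix (Fin d) (Fin d) ℝ,
        ((∀ t ∈ Icc (0 : ℝ) T, (K' t).PosSemidef) ∧
          ContinuousOn K' (Icc 0 T) ∧
          (∃ C : ℝ, ∀ t ∈ Icc (0 : ℝ) T, ‖K' t‖ ≤ C) ∧
          K' T = P ∧
          ∀ t ∈ Icc (0 : ℝ) T,
            HasDerivWithinAt K'
              (-(Q t + (σx t)ᵀ * K' t * σx t + K' t * bx t + (bx t)ᵀ * K' t - ρ • K' t -
                (I t + (σ₁ t)ᵀ * K' t * σx t + (b₁ t)ᵀ * K' t)ᵀ *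
                  (N t + (σ₁ t)ᵀ * K' t * σ₁ t)⁻¹ *
                  (I t + (σ₁ t)ᵀ * K' t * σx t + (b₁ t)ᵀ * K' t)))
              (Icc 0 T) t) →
        EqOn K' K (Icc 0 T) := by
  let c (t : ℝ) : LQCoeff (Fin d₁) (Fin d) := ⟨Q t, bx t, σx t, b₁ t, σ₁ t, I t, N t, ρ⟩
  have hc : LQCoeff.IsContinuousOn c (Icc 0 T) :=
    ⟨hQc, hbxc, hσxc, hb₁c, hσ₁c, hIc, hNc, continuousOn_const⟩
  have hconv : ∀ t ∈ Icc 0 T, (c t).IsConvex := fun t ht ↦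
    ⟨posDef_of_posSemidef_sub_smul_one hδ (hN t ht).2, hQI t ht⟩
  obtain ⟨K, hK, huniq⟩ := riccati_ODE_K_wellposed_general hT.le hc hconv hP
  refine ⟨K, ⟨hK.posSemidef, hK.continuousOn,
    isCompact_Icc.exists_bound_of_continuousOn hK.continuousOn, hK.terminal,
    hK.hasDerivWithinAt⟩, fun K' ⟨hpsd, _, _, hT', hK'⟩ ↦ huniq K' ⟨hT', hpsd, hK'⟩⟩
end

section
/- Existence of a positive semidefinite solution to the stationary algebraic Riccati equation (infinite horizon, Step 6(i) of Section 3.1): Let d, d₁ ≥ 1 and let Q ∈ S^d be positive semidefinite, bₓ, σₓ, b̃ₓ, σ̃ₓ ∈ ℝ^{d×d}, b₁, σ₁ ∈ ℝ^{d×d₁}, I ∈ ℝ^{d₁×d}, and N ∈ S^{d₁} positive definite, with Q − Iᵀ N⁻¹ I positive semidefinite. Assume the discount condition ρ > 2(‖bₓ‖ + ‖b̃ₓ‖ + 8(‖σₓ‖² + ‖σ̃ₓ‖²)). Then there exists a symmetric positive semidefinite d × d matrix K satisfying Q + σₓᵀ K σₓ + K bₓ + bₓᵀ K − ρ K − (I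 + σ₁ᵀ K σₓ + b₁ᵀ K)ᵀ (N + σ₁ᵀ K σ₁)⁻¹ (I + σ₁ᵀ K σₓ + b₁ᵀ K) = 0. -/
open Matrix

/-- The operator norm of a real `d × d` matrix, viewed as a linear operator on
Euclidean space `ℝ^d`. -/
noncomputable def matOpNorm {d : ℕ} (M : Matrix (Fin d) (Fin d) ℝ) : ℝ :=
  ‖LinearMap.toContinuousLinearMap (Matrix.toEuclideanLin M)‖

/-!
Call `K ≥ 0` a supersolution if the Riccati operator is `≤ 0` at `K`. Completing the square writes
the Riccati operator as the minimum over feedbacks `Θ` of `X ↦ L_Θ X + cost Θ`, where `L_Θ` is the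
Lyapunov operator of the closed loop. When all the costs are positive definite, a supersolution `K`
is a strict Lyapunov matrix for its own optimal feedback `Θ`, hence `L_Θ` is invertible and `-L_Θ`
has a positive inverse. The Newton step `K' = -L_Θ⁻¹ (cost Θ)` is then again a supersolution, with
`0 ≤ K' ≤ K`, and `K' = K` only if `K` solves the equation. So a minimal element of the compact set
of supersolutions below a given one is a solution. Under the hypotheses of the theorem the costs are
only positive semidefinite; replacing `Q` by `Q + ε` makes them definite, and the solutions for
`ε > 0` stay below one supersolution, hence accumulate as `ε → 0` at a solution.
-/

section

open Set Filter Topology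
open scoped MatrixOrder ComplexOrder

variable {𝕜 n m : Type*} [RCLike 𝕜]

instance matrix_orderClosedTopology [Finite n] : OrderClosedTopology (Matrix n n 𝕜) where
  isClosed_le' := by
    cases nonempty_fintype n
    refine isClosed_le_of_isClosed_nonneg ?_
    simp only [nonneg_iff_posSemidef, posSemidef_iff_dotProduct_mulVec, IsHermitian,
      ofPred_and, ofPred_forall]
    exact (isClosed_eq (by fun_prop) continuous_id).inter
      (isClosed_iInter fun v => isClosed_le continuous_const (by fun_prop))

theorem continuousOn_matrix_mul_s11 {α : Type*} [TopologicalSpace α] {l : Type*} [Fintype n]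
    {s : Set α} {f : α → Matrix l n 𝕜} {g : α → Matrix n m 𝕜} (hf : ContinuousOn f s)
    (hg : ContinuousOn g s) : ContinuousOn (fun x => f x * g x) s := by
  rw [continuousOn_iff_continuous_domRestrict] at hf hg ⊢
  exact hf.matrix_mul hg

theorem exists_minimal_of_isCompact [Finite n] {s : Set (Matrix n n 𝕜)} (hs : IsCompact s)
    (hne : s.Nonempty) : ∃ M, Minimal (· ∈ s) M := by
  cases nonempty_fintype n
  obtain ⟨M, hMs, hmin⟩ := hs.exists_isMinOn hne (f := fun M => RCLike.re M.trace) (by fun_prop)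
  refine ⟨M, hMs, fun M' hM's hle => ?_⟩
  have hre : RCLike.re M.trace ≤ RCLike.re M'.trace := hmin hM's
  have hnonneg : 0 ≤ (M - M').trace := PosSemidef.trace_nonneg hle
  have htrace : (M - M').trace = 0 := by
    rw [RCLike.nonneg_iff] at hnonneg
    refine RCLike.ext (le_antisymm ?_ (by simpa using hnonneg.1)) (by simpa using hnonneg.2)
    simpa using hre
  exact (sub_eq_zero.1 ((PosSemidef.trace_eq_zero_iff hle).1 htrace)).le

section Norm

open scoped Matrix.Norms.L2Operator

variable [Fintype n] [DecidableEq n]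

/-- The operator norm on matrices over `𝕜`, as a norm of real algebras; Mathlib has this structure
over `𝕜` only. -/
noncomputable instance matrixRealNormedAlgebra : NormedAlgebra ℝ (Matrix n n 𝕜) where
  norm_smul_le r M := by
    rw [RCLike.real_smul_eq_coe_smul (K := 𝕜), norm_smul, RCLike.norm_ofReal, Real.norm_eq_abs]

theorem le_norm_smul_one {M : Matrix n n 𝕜} (hM : M.IsHermitian) :
    M ≤ ‖M‖ • (1 : Matrix n n 𝕜) := by
  cases isEmpty_or_nonempty n
  · exact (Subsingleton.elim _ _).le
  rw [← Algebra.algebraMap_eq_smul_one]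
  exact le_algebraMap_of_spectrum_le
    (fun r hr => (Real.le_norm_self r).trans (spectrum.norm_le_norm_of_mem (𝕜 := ℝ) hr))
    hM.isSelfAdjoint

theorem norm_le_norm_of_nonneg_of_le {M P : Matrix n n 𝕜} (hM : 0 ≤ M) (hMP : M ≤ P) :
    ‖M‖ ≤ ‖P‖ := by
  cases isEmpty_or_nonempty n
  · simp only [Subsingleton.elim M P, le_refl]
  have hsa : IsSelfAdjoint M := hM.posSemidef.isHermitian
  obtain ⟨⟨r, hr, hrM⟩, -⟩ :=
    IsometricContinuousFunctionalCalculus.isGreatest_norm_spectrum (𝕜 := ℝ) M hsa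
  have hle : M ≤ algebraMap ℝ _ ‖P‖ := by
    rw [Algebra.algebraMap_eq_smul_one]
    exact hMP.trans (le_norm_smul_one (hM.trans hMP).posSemidef.isHermitian)
  calc ‖M‖ = ‖r‖ := hrM.symm
    _ = r := Real.norm_of_nonneg (spectrum_nonneg_of_nonneg hM hr)
    _ ≤ ‖P‖ := (le_algebraMap_iff_spectrum_le hsa).1 hle r hr

end Norm

open scoped Matrix.Norms.L2Operator in
theorem isCompact_Icc_zero [Finite n] (P : Matrix n n 𝕜) : IsCompact (Icc 0 P) := by
  classical
  cases nonempty_fintype n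
  have := FiniteDimensional.proper_rclike 𝕜 (Matrix n n 𝕜)
  refine (isCompact_closedBall (0 : Matrix n n 𝕜) ‖P‖).of_isClosed_subset isClosed_Icc ?_
  rintro M ⟨hM, hMP⟩
  simpa only [mem_closedBall_zero_iff] using norm_le_norm_of_nonneg_of_le hM hMP

open scoped Matrix.Norms.L2Operator in
theorem exists_pos_le_smul_of_posDef [Finite n] {M P : Matrix n n 𝕜} (hM : M.IsHermitian)
    (hP : P.PosDef) : ∃ c : ℝ, 0 < c ∧ M ≤ c • P := by
  classical
  cases nonempty_fintype n
  cases isEmpty_or_nonempty n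
  · exact ⟨1, one_pos, (Subsingleton.elim _ _).le⟩
  obtain ⟨r, hr, hrP⟩ := (CFC.exists_pos_algebraMap_le_iff (a := P) hP.isHermitian).2
    fun _ => (isStrictlyPositive_iff_posDef.2 hP).spectrum_pos
  rw [Algebra.algebraMap_eq_smul_one] at hrP
  refine ⟨(‖M‖ + 1) / r, by positivity, ?_⟩
  calc M ≤ ‖M‖ • (1 : Matrix n n 𝕜) := le_norm_smul_one hM
    _ ≤ (‖M‖ + 1) • (1 : Matrix n n 𝕜) :=
      smul_le_smul_of_nonneg_right (by linarith) zero_le_one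
    _ = ((‖M‖ + 1) / r) • r • (1 : Matrix n n 𝕜) := by rw [smul_smul, div_mul_cancel₀ _ hr.ne']
    _ ≤ ((‖M‖ + 1) / r) • P := smul_le_smul_of_nonneg_left hrP (by positivity)

variable [Fintype n] [Fintype m]

/-- The generalized Lyapunov operator `X ↦ Aᴴ X + X A + Cᴴ X C` of the linear stochastic equation
`dx = A x dt + C x dW`. It is taken as an `ℝ`-linear map so that it restricts to the Hermitian
matrices. -/
def lyapunov (A C : Matrix n n 𝕜) : Matrix n n 𝕜 →ₗ[ℝ] Matrix n n 𝕜 where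
  toFun X := Aᴴ * X + X * A + Cᴴ * X * C
  map_add' X Y := by noncomm_ring
  map_smul' c X := by simp only [Matrix.mul_smul, Matrix.smul_mul, smul_add, RingHom.id_apply]

theorem lyapunov_apply (A C X : Matrix n n 𝕜) :
    lyapunov A C X = Aᴴ * X + X * A + Cᴴ * X * C := rfl

section Lyapunov

variable {A C P X : Matrix n n 𝕜}

theorem isHermitian_lyapunov (A C : Matrix n n 𝕜) (hX : X.IsHermitian) :
    (lyapunov A C X).IsHermitian := by
  simp only [IsHermitian, lyapunov_apply, conjTranspose_add, conjTranspose_mul,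
    conjTranspose_conjTranspose, hX.eq, add_comm, Matrix.mul_assoc]

theorem dotProduct_lyapunov_mulVec_nonneg (hX : X.PosSemidef) (A C : Matrix n n 𝕜) {v : n → 𝕜}
    (hv : X *ᵥ v = 0) : 0 ≤ star v ⬝ᵥ (lyapunov A C X *ᵥ v) := by
  have hv' : star v ᵥ* X = 0 := by
    rw [← star_eq_zero, star_vecMul, hX.isHermitian.eq, star_star, hv]
  have hAX : star v ⬝ᵥ ((Aᴴ * X) *ᵥ v) = 0 := by
    rw [← mulVec_mulVec, hv, mulVec_zero, dotProduct_zero]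
  have hXA : star v ⬝ᵥ ((X * A) *ᵥ v) = 0 := by
    rw [← mulVec_mulVec, dotProduct_mulVec, hv', zero_dotProduct]
  rw [lyapunov_apply, add_mulVec, add_mulVec, dotProduct_add, dotProduct_add, hAX, hXA, add_zero,
    zero_add]
  exact (hX.conjTranspose_mul_mul_same C).dotProduct_mulVec_nonneg v

theorem posDef_of_neg_lyapunov_posDef (hX : X.PosSemidef) (hLX : (-lyapunov A C X).PosDef) :
    X.PosDef := by
  refine .of_dotProduct_mulVec_pos hX.isHermitian fun v hv =>
    (hX.dotProduct_mulVec_nonneg v).lt_of_ne' fun h => ?_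
  have hneg := hLX.dotProduct_mulVec_pos hv
  rw [neg_mulVec, dotProduct_neg, neg_pos] at hneg
  exact hneg.not_ge
    (dotProduct_lyapunov_mulVec_nonneg hX A C ((hX.dotProduct_mulVec_zero_iff v).1 h))

theorem nonneg_of_lyapunov_nonpos (hP : P.PosSemidef) (hLP : (-lyapunov A C P).PosDef)
    (hX : X.IsHermitian) (hLX : lyapunov A C X ≤ 0) : 0 ≤ X := by
  -- `t` is the least shift making `X + t P` nonnegative. If `t > 0`, the shifted matrix is
  -- again strictly Lyapunov, hence definite, so the shift could be reduced.
  let s : Set ℝ := {t | 0 ≤ t ∧ 0 ≤ X + t • P}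
  have hs : IsClosed s := (isClosed_le continuous_const continuous_id).inter
    (isClosed_le continuous_const (by fun_prop : Continuous fun t : ℝ => X + t • P))
  have hbdd : BddBelow s := ⟨0, fun _ ht => ht.1⟩
  have hne : s.Nonempty := by
    obtain ⟨c, hc, hle⟩ :=
      exists_pos_le_smul_of_posDef hX.neg (posDef_of_neg_lyapunov_posDef hP hLP)
    exact ⟨c, hc.le, neg_le_iff_add_nonneg'.1 hle⟩
  obtain ⟨ht, hY⟩ : sInf s ∈ s := hs.csInf_mem hne hbdd
  set t := sInf s
  rcases ht.eq_or_lt with ht0 | ht0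
  · simpa only [← ht0, zero_smul, add_zero] using hY
  have hLY : (-lyapunov A C (X + t • P)).PosDef := by
    rw [map_add, map_smul, neg_add, ← smul_neg]
    exact (hLP.smul ht0).posSemidef_add (neg_nonneg.2 hLX).posSemidef
  obtain ⟨c, hc, hle⟩ :=
    exists_pos_le_smul_of_posDef hP.isHermitian (posDef_of_neg_lyapunov_posDef hY.posSemidef hLY)
  have hdrop : c⁻¹ • P ≤ X + t • P := by
    rwa [inv_smul_le_iff_of_pos hc]
  have hmem : max 0 (t - c⁻¹) ∈ s := by
    refine ⟨le_max_left _ _, ?_⟩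
    calc 0 ≤ X + t • P - c⁻¹ • P := sub_nonneg.2 hdrop
      _ = X + (t - c⁻¹) • P := by rw [sub_smul, add_sub_assoc]
      _ ≤ X + max 0 (t - c⁻¹) • P := by
        gcongr
        · exact hP.nonneg
        · exact le_max_right _ _
  have hlt : max 0 (t - c⁻¹) < t := max_lt ht0 (sub_lt_self t (inv_pos.2 hc))
  exact absurd (csInf_le hbdd hmem) hlt.not_ge

theorem eq_zero_of_lyapunov_eq_zero (hP : P.PosSemidef) (hLP : (-lyapunov A C P).PosDef)
    (hX : X.IsHermitian) (hLX : lyapunov A C X = 0) : X = 0 :=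
  le_antisymm
    (neg_nonneg.1 (nonneg_of_lyapunov_nonpos hP hLP hX.neg (by rw [map_neg, hLX, neg_zero])))
    (nonneg_of_lyapunov_nonpos hP hLP hX hLX.le)

theorem exists_lyapunov_eq (hP : P.PosSemidef) (hLP : (-lyapunov A C P).PosDef)
    {G : Matrix n n 𝕜} (hG : G.IsHermitian) : ∃ X, X.IsHermitian ∧ lyapunov A C X = G := by
  let H := selfAdjoint.submodule ℝ (Matrix n n 𝕜)
  let T : H →ₗ[ℝ] H := (lyapunov A C).restrict fun _ => isHermitian_lyapunov A C
  have hT : Function.Injective T := (injective_iff_map_eq_zero T).2 fun X hX =>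
    Subtype.ext (eq_zero_of_lyapunov_eq_zero hP hLP X.2 (congrArg Subtype.val hX))
  obtain ⟨X, hX⟩ := LinearMap.injective_iff_surjective.1 hT ⟨G, hG⟩
  exact ⟨X, X.2, congrArg Subtype.val hX⟩

end Lyapunov

/-- Mean-square stabilizability of the controlled equation `dx = (A x + B u) dt + (C x + D u) dW`:
some feedback `u = Θ x` admits a strict quadratic Lyapunov function. -/
def IsMeanSquareStabilizable (A C : Matrix n n 𝕜) (B D : Matrix n m 𝕜) : Prop :=
  ∃ (Θ : Matrix m n 𝕜) (P : Matrix n n 𝕜),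
    P.PosSemidef ∧ (-lyapunov (A + B * Θ) (C + D * Θ) P).PosDef

open scoped Matrix.Norms.L2Operator in
theorem isMeanSquareStabilizable_of_norm_lt [DecidableEq n] {ρ : ℝ} {A C : Matrix n n 𝕜}
    (h : 2 * ‖A‖ + ‖C‖ ^ 2 < ρ) (B D : Matrix n m 𝕜) :
    IsMeanSquareStabilizable (A - (ρ / 2) • 1) C B D := by
  have hA : Aᴴ + A ≤ (2 * ‖A‖) • (1 : Matrix n n 𝕜) := by
    refine (le_norm_smul_one (by simp [IsHermitian, add_comm])).trans
      (smul_le_smul_of_nonneg_right ?_ zero_le_one)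
    calc ‖Aᴴ + A‖ ≤ ‖Aᴴ‖ + ‖A‖ := norm_add_le _ _
      _ = 2 * ‖A‖ := by rw [l2_opNorm_conjTranspose, two_mul]
  have hC : Cᴴ * C ≤ ‖C‖ ^ 2 • (1 : Matrix n n 𝕜) := by
    rw [sq, ← l2_opNorm_conjTranspose_mul_self]
    exact le_norm_smul_one (isHermitian_conjTranspose_mul_self C)
  have hL : lyapunov (A - (ρ / 2) • 1) C 1 = Aᴴ + A + Cᴴ * C - ρ • (1 : Matrix n n 𝕜) := by
    simp only [lyapunov_apply, conjTranspose_sub, conjTranspose_smul, conjTranspose_one,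
      star_trivial, Matrix.mul_one, Matrix.one_mul]
    module
  refine ⟨0, 1, .one, ?_⟩
  rw [Matrix.mul_zero, Matrix.mul_zero, add_zero, add_zero, hL]
  have hgap := (PosDef.one (n := n) (R := 𝕜)).smul (sub_pos.2 h)
  convert hgap.add_posSemidef (sub_nonneg.2 (add_le_add hA hC)).posSemidef using 1
  module

theorem complete_square {α : Type*} [CommRing α] [StarRing α] [DecidableEq m]
    {ι : Type*} {R : Matrix m m α} (hR : R.IsHermitian) (hRu : IsUnit R) (S Θ : Matrix m ι α) :
    (Θ + R⁻¹ * S)ᴴ * R * (Θ + R⁻¹ * S) = Θᴴ * R * Θ + Θᴴ * S + Sᴴ * Θ + Sᴴ * R⁻¹ * S := by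
  have hdet := (isUnit_iff_isUnit_det R).1 hRu
  simp only [conjTranspose_add, conjTranspose_mul, conjTranspose_nonsing_inv, hR.eq,
    Matrix.add_mul, Matrix.mul_add, Matrix.mul_assoc, mul_nonsing_inv_cancel_left R _ hdet,
    nonsing_inv_mul_cancel_left R _ hdet]
  abel

/-- The data of a stochastic linear-quadratic control problem: the dynamics
`dx = (A x + B u) dt + (C x + D u) dW` and the running cost `x*Qx + 2 Re (u*Sx) + u*Ru`. -/
structure LQSystem (𝕜 n m : Type*) where
  (A C Q : Matrix n n 𝕜)
  (B D : Matrix n m 𝕜)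
  (S : Matrix m n 𝕜)
  (R : Matrix m m 𝕜)

namespace LQSystem

/-- The quadratic running cost of the feedback `u = Θ x`. -/
def cost (L : LQSystem 𝕜 n m) (Θ : Matrix m n 𝕜) : Matrix n n 𝕜 :=
  L.Q + Θᴴ * L.R * Θ + Θᴴ * L.S + L.Sᴴ * Θ

/-- The Lyapunov operator of the dynamics under the feedback `u = Θ x`. -/
def closedLoop (L : LQSystem 𝕜 n m) (Θ : Matrix m n 𝕜) : Matrix n n 𝕜 →ₗ[ℝ] Matrix n n 𝕜 :=
  lyapunov (L.A + L.B * Θ) (L.C + L.D * Θ)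

/-- The effective control weight: the part of the Hamiltonian at `K` that is quadratic in `u`. -/
def weight (L : LQSystem 𝕜 n m) (K : Matrix n n 𝕜) : Matrix m m 𝕜 :=
  L.R + L.Dᴴ * K * L.D

/-- The effective cross term: the part of the Hamiltonian at `K` that is bilinear in `u`, `x`. -/
def cross (L : LQSystem 𝕜 n m) (K : Matrix n n 𝕜) : Matrix m n 𝕜 :=
  L.S + L.Dᴴ * K * L.C + L.Bᴴ * K

/-- The system with state cost `Q + E` in place of `Q`. -/
def addStateCost (L : LQSystem 𝕜 n m) (E : Matrix n n 𝕜) : LQSystem 𝕜 n m :=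
  { L with Q := L.Q + E }

variable {L : LQSystem 𝕜 n m} {K P : Matrix n n 𝕜}

omit [Fintype n] in
theorem cost_addStateCost (E : Matrix n n 𝕜) (Θ : Matrix m n 𝕜) :
    (L.addStateCost E).cost Θ = L.cost Θ + E := by
  simp only [cost, addStateCost]
  abel

omit [Fintype m] in
theorem continuous_weight (L : LQSystem 𝕜 n m) : Continuous L.weight := by
  unfold weight
  fun_prop

omit [Fintype m] in
theorem continuous_cross (L : LQSystem 𝕜 n m) : Continuous L.cross := by
  unfold cross
  fun_prop

omit [Fintype m] in
theorem posDef_weight [Finite m] (hR : L.R.PosDef) (hK : 0 ≤ K) : (L.weight K).PosDef :=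
  hR.add_posSemidef (hK.posSemidef.conjTranspose_mul_mul_same L.D)

variable [DecidableEq m]

/-- The Riccati operator, whose zeros are the solutions of the stationary Riccati equation. -/
noncomputable def riccati (L : LQSystem 𝕜 n m) (K : Matrix n n 𝕜) : Matrix n n 𝕜 :=
  L.Q + L.Cᴴ * K * L.C + K * L.A + L.Aᴴ * K - (L.cross K)ᴴ * (L.weight K)⁻¹ * L.cross K

/-- The feedback minimizing the Hamiltonian at `K`. -/
noncomputable def gain (L : LQSystem 𝕜 n m) (K : Matrix n n 𝕜) : Matrix m n 𝕜 :=
  -((L.weight K)⁻¹ * L.cross K)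

theorem riccati_addStateCost (E : Matrix n n 𝕜) :
    (L.addStateCost E).riccati K = L.riccati K + E := by
  simp only [riccati, addStateCost, cross, weight]
  abel

theorem riccati_add_square (hR : L.R.PosDef) (hK : 0 ≤ K) (Θ : Matrix m n 𝕜) :
    L.riccati K + (Θ - L.gain K)ᴴ * L.weight K * (Θ - L.gain K) =
      L.closedLoop Θ K + L.cost Θ := by
  have hW := posDef_weight hR hK
  rw [gain, sub_neg_eq_add, complete_square hW.isHermitian hW.isUnit]
  simp only [riccati]
  generalize (L.cross K)ᴴ * (L.weight K)⁻¹ * L.cross K = Z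
  simp only [closedLoop, lyapunov_apply, cost, weight, cross, conjTranspose_add, conjTranspose_mul,
    conjTranspose_conjTranspose, hK.posSemidef.isHermitian.eq, Matrix.add_mul, Matrix.mul_add,
    Matrix.mul_assoc]
  abel

theorem riccati_eq (hR : L.R.PosDef) (hK : 0 ≤ K) :
    L.riccati K = L.closedLoop (L.gain K) K + L.cost (L.gain K) := by
  simpa only [sub_self, Matrix.mul_zero, add_zero] using riccati_add_square hR hK (L.gain K)

theorem riccati_le (hR : L.R.PosDef) (hK : 0 ≤ K) (Θ : Matrix m n 𝕜) :
    L.riccati K ≤ L.closedLoop Θ K + L.cost Θ := by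
  rw [← riccati_add_square hR hK Θ]
  exact le_add_of_nonneg_right
    ((posDef_weight hR hK).posSemidef.conjTranspose_mul_mul_same _).nonneg

omit [Fintype n] in
theorem cost_nonneg [Finite n] (hR : L.R.PosDef) (hQ : (L.Q - L.Sᴴ * L.R⁻¹ * L.S).PosSemidef)
    (Θ : Matrix m n 𝕜) : 0 ≤ L.cost Θ := by
  have hsq : L.cost Θ = (L.Q - L.Sᴴ * L.R⁻¹ * L.S) +
      (Θ + L.R⁻¹ * L.S)ᴴ * L.R * (Θ + L.R⁻¹ * L.S) := by
    rw [complete_square hR.isHermitian hR.isUnit, cost]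
    abel
  rw [hsq]
  exact (hQ.add (hR.posSemidef.conjTranspose_mul_mul_same _)).nonneg

theorem continuousOn_riccati (hR : L.R.PosDef) : ContinuousOn L.riccati (Ici 0) := by
  have hlin : Continuous fun K => L.Q + L.Cᴴ * K * L.C + K * L.A + L.Aᴴ * K := by fun_prop
  have hinv : ContinuousOn (fun K => (L.weight K)⁻¹) (Ici 0) := fun K hK => by
    have hdet : (L.weight K).det ≠ 0 := (posDef_weight hR hK).det_pos.ne'
    refine ((continuousAt_matrix_inv _ ?_).comp L.continuous_weight.continuousAt).continuousWithinAt
    simpa only [Ring.inverse_eq_inv'] using continuousAt_inv₀ hdet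
  exact hlin.continuousOn.sub
    (continuousOn_matrix_mul_s11
      (continuousOn_matrix_mul_s11 L.continuous_cross.matrix_conjTranspose.continuousOn hinv)
      L.continuous_cross.continuousOn)

theorem exists_newton_step (hR : L.R.PosDef) (hcost : (L.cost (L.gain K)).PosDef) (hK : 0 ≤ K)
    (hsup : L.riccati K ≤ 0) :
    ∃ K', 0 ≤ K' ∧ K' ≤ K ∧ L.riccati K' ≤ 0 ∧ (K' = K → L.riccati K = 0) := by
  have hric := riccati_eq hR hK
  have hLK : (-L.closedLoop (L.gain K) K).PosDef := by
    have hsplit : -L.closedLoop (L.gain K) K = L.cost (L.gain K) + -L.riccati K := by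
      rw [hric]
      abel
    rw [hsplit]
    exact hcost.add_posSemidef (neg_nonneg.2 hsup).posSemidef
  obtain ⟨K', hK', hLK'⟩ := exists_lyapunov_eq hK.posSemidef hLK hcost.isHermitian.neg
  change L.closedLoop (L.gain K) K' = _ at hLK'
  have hK'0 : 0 ≤ K' := nonneg_of_lyapunov_nonpos hK.posSemidef hLK hK'
    (hLK'.trans_le (neg_nonpos.2 hcost.posSemidef.nonneg))
  refine ⟨K', hK'0, ?_, ?_, ?_⟩
  · refine sub_nonneg.1
      (nonneg_of_lyapunov_nonpos hK.posSemidef hLK (hK.posSemidef.isHermitian.sub hK') ?_)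
    change L.closedLoop (L.gain K) (K - K') ≤ 0
    rwa [map_sub, hLK', sub_neg_eq_add, ← hric]
  · exact (riccati_le hR hK'0 (L.gain K)).trans_eq (by rw [hLK', neg_add_cancel])
  · rintro rfl
    rw [hric, hLK', neg_add_cancel]

theorem exists_riccati_eq_zero_of_cost_posDef (hR : L.R.PosDef) (hcost : ∀ Θ, (L.cost Θ).PosDef)
    (hP : 0 ≤ P) (hsup : L.riccati P ≤ 0) : ∃ K ∈ Icc 0 P, L.riccati K = 0 := by
  have hcompact : IsCompact (Icc 0 P ∩ L.riccati ⁻¹' Iic 0) :=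
    (isCompact_Icc_zero P).of_isClosed_subset
      (((continuousOn_riccati hR).mono Icc_subset_Ici_self).preimage_isClosed_of_isClosed
        isClosed_Icc isClosed_Iic) inter_subset_left
  obtain ⟨K, ⟨hKP, hKsup⟩, hmin⟩ :=
    exists_minimal_of_isCompact hcompact ⟨P, right_mem_Icc.2 hP, hsup⟩
  obtain ⟨K', hK', hle, hsup', hfix⟩ := exists_newton_step hR (hcost _) hKP.1 hKsup
  exact ⟨K, hKP, hfix (hle.antisymm (hmin ⟨⟨hK', hle.trans hKP.2⟩, hsup'⟩ hle))⟩

theorem exists_riccati_add_one_nonpos [DecidableEq n] (hR : L.R.PosDef)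
    (hQ : (L.Q - L.Sᴴ * L.R⁻¹ * L.S).PosSemidef)
    (hstab : IsMeanSquareStabilizable L.A L.C L.B L.D) :
    ∃ P, 0 ≤ P ∧ L.riccati P + 1 ≤ 0 := by
  obtain ⟨Θ, P, hP, hLP⟩ := hstab
  obtain ⟨c, hc, hle⟩ := exists_pos_le_smul_of_posDef
    ((cost_nonneg hR hQ Θ).posSemidef.isHermitian.add isHermitian_one) hLP
  have hcP : 0 ≤ c • P := smul_nonneg hc.le hP.nonneg
  refine ⟨c • P, hcP, ?_⟩
  calc L.riccati (c • P) + 1 ≤ L.closedLoop Θ (c • P) + L.cost Θ + 1 := by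
        gcongr
        exact riccati_le hR hcP Θ
    _ = L.cost Θ + 1 - c • -L.closedLoop Θ P := by
        rw [map_smul]
        module
    _ ≤ 0 := sub_nonpos.2 hle

theorem neg_smul_one_mem_image_riccati [DecidableEq n] (hR : L.R.PosDef)
    (hQ : (L.Q - L.Sᴴ * L.R⁻¹ * L.S).PosSemidef) (hP : 0 ≤ P) (hsup : L.riccati P + 1 ≤ 0)
    {ε : ℝ} (hε : ε ∈ Ioc 0 1) : -ε • (1 : Matrix n n 𝕜) ∈ L.riccati '' Icc 0 P := by
  let E : Matrix n n 𝕜 := ε • 1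
  have hE : E.PosDef := PosDef.one.smul hε.1
  have hE1 : E ≤ 1 :=
    (smul_le_smul_of_nonneg_right hε.2 PosSemidef.one.nonneg).trans_eq (one_smul ℝ _)
  have hcost : ∀ Θ, ((L.addStateCost E).cost Θ).PosDef := fun Θ => by
    rw [cost_addStateCost]
    exact hE.posSemidef_add (cost_nonneg hR hQ Θ).posSemidef
  have hsupE : (L.addStateCost E).riccati P ≤ 0 := by
    rw [riccati_addStateCost]
    exact (add_le_add_right hE1 _).trans hsup
  obtain ⟨K, hK, hKE⟩ :=
    exists_riccati_eq_zero_of_cost_posDef (L := L.addStateCost E) hR hcost hP hsupE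
  rw [riccati_addStateCost] at hKE
  exact ⟨K, hK, by rw [eq_neg_of_add_eq_zero_left hKE, neg_smul]⟩

theorem exists_riccati_eq_zero (hR : L.R.PosDef) (hQ : (L.Q - L.Sᴴ * L.R⁻¹ * L.S).PosSemidef)
    (hstab : IsMeanSquareStabilizable L.A L.C L.B L.D) : ∃ K, 0 ≤ K ∧ L.riccati K = 0 := by
  classical
  obtain ⟨P, hP, hsup⟩ := exists_riccati_add_one_nonpos hR hQ hstab
  have hclosed : IsClosed (L.riccati '' Icc 0 P) :=
    ((isCompact_Icc_zero P).image_of_continuousOn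
      ((continuousOn_riccati hR).mono Icc_subset_Ici_self)).isClosed
  have hlim : Tendsto (fun ε : ℝ => -ε • (1 : Matrix n n 𝕜)) (𝓝[>] 0) (𝓝 0) :=
    tendsto_nhdsWithin_of_tendsto_nhds (Continuous.tendsto' (by fun_prop) _ _ (by simp))
  obtain ⟨K, hK, hK0⟩ := hclosed.mem_of_tendsto hlim
    (eventually_of_mem (Ioc_mem_nhdsGT one_pos) fun _ =>
      neg_smul_one_mem_image_riccati hR hQ hP hsup)
  exact ⟨K, hK.1, hK0⟩

end LQSystem

/-- The discounted equation is the undiscounted one with `A = bx - ρ / 2`. -/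
theorem stationary_riccati_existence_general [DecidableEq n] [DecidableEq m] (ρ : ℝ)
    (Q bx σx : Matrix n n 𝕜) (b₁ σ₁ : Matrix n m 𝕜) (I : Matrix m n 𝕜) (N : Matrix m m 𝕜)
    (hN : N.PosDef) (hQI : (Q - Iᴴ * N⁻¹ * I).PosSemidef)
    (hstab : IsMeanSquareStabilizable (bx - (ρ / 2) • 1) σx b₁ σ₁) :
    ∃ K : Matrix n n 𝕜, K.PosSemidef ∧
      Q + σxᴴ * K * σx + K * bx + bxᴴ * K - ρ • K -
        (I + σ₁ᴴ * K * σx + b₁ᴴ * K)ᴴ * (N + σ₁ᴴ * K * σ₁)⁻¹ *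
          (I + σ₁ᴴ * K * σx + b₁ᴴ * K) = 0 := by
  obtain ⟨K, hK, hK0⟩ := LQSystem.exists_riccati_eq_zero
    (L := ⟨bx - (ρ / 2) • 1, σx, Q, b₁, σ₁, I, N⟩) hN hQI hstab
  refine ⟨K, hK.posSemidef, Eq.trans ?_ hK0⟩
  simp only [LQSystem.riccati, LQSystem.cross, LQSystem.weight, Matrix.mul_sub, Matrix.sub_mul,
    Matrix.mul_smul, Matrix.smul_mul, Matrix.mul_one, Matrix.one_mul, conjTranspose_sub,
    conjTranspose_smul, conjTranspose_one, star_trivial]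
  module

theorem isMeanSquareStabilizable_of_matOpNorm_lt {d : ℕ} {ρ : ℝ}
    {bx btx σx σtx : Matrix (Fin d) (Fin d) ℝ}
    (hdisc : ρ > 2 * (matOpNorm bx + matOpNorm btx +
      8 * (matOpNorm σx ^ 2 + matOpNorm σtx ^ 2)))
    (b₁ σ₁ : Matrix (Fin d) m ℝ) :
    IsMeanSquareStabilizable (bx - (ρ / 2) • 1) σx b₁ σ₁ := by
  refine isMeanSquareStabilizable_of_norm_lt ?_ b₁ σ₁
  change 2 * matOpNorm bx + matOpNorm σx ^ 2 < ρ
  have hbtx : 0 ≤ matOpNorm btx := norm_nonneg _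
  nlinarith only [hdisc, hbtx, sq_nonneg (matOpNorm σx), sq_nonneg (matOpNorm σtx)]

end

/-- Existence of a positive semidefinite solution to the stationary algebraic Riccati
equation (infinite horizon, Step 6(i) of Section 3.1). -/
theorem stationary_riccati_existence
    (d d₁ : ℕ) (hd : 1 ≤ d) (hd₁ : 1 ≤ d₁) (ρ : ℝ) (hρpos : 0 < ρ)
    (Q : Matrix (Fin d) (Fin d) ℝ) (hQ : Q.PosSemidef)
    (bx σx btx σtx : Matrix (Fin d) (Fin d) ℝ)
    (b₁ σ₁ : Matrix (Fin d) (Fin d₁) ℝ)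
    (I : Matrix (Fin d₁) (Fin d) ℝ)
    (N : Matrix (Fin d₁) (Fin d₁) ℝ) (hN : N.PosDef)
    (hQI : (Q - Iᵀ * N⁻¹ * I).PosSemidef)
    (hdisc : ρ > 2 * (matOpNorm bx + matOpNorm btx +
      8 * (matOpNorm σx ^ 2 + matOpNorm σtx ^ 2))) :
    ∃ K : Matrix (Fin d) (Fin d) ℝ, K.PosSemidef ∧
      Q + σxᵀ * K * σx + K * bx + bxᵀ * K - ρ • K -
        (I + σ₁ᵀ * K * σx + b₁ᵀ * K)ᵀ * (N + σ₁ᵀ * K * σ₁)⁻¹ *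
          (I + σ₁ᵀ * K * σx + b₁ᵀ * K) = 0 := by
  simpa only [conjTranspose_eq_transpose_of_trivial] using
    stationary_riccati_existence_general ρ Q bx σx b₁ σ₁ I N hN
      (by rwa [conjTranspose_eq_transpose_of_trivial])
      (isMeanSquareStabilizable_of_matOpNorm_lt hdisc b₁ σ₁)
end
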